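/- Let G be a graph on n vertices and λ a positive integer with connectivity κ ≥ λ and minimum degree δ ≥ (n+2)/(λ+1) + λ − 2. Then every longest cycle C in G is a CD_{min{λ, δ−λ+1}}-cycle; that is, every cycle in G of length at least min{λ, δ−λ+1} has a vertex in common with C. -/

import Mathlib

open SimpleGraph

variable {V : Type*}

/-- `G` is `k`-connected: more than `k` vertices and removing fewer than `k`
vertices leaves a connected graph. -/
def KConnected (G : SimpleGraph V) [Fintype V] (k : ℕ) : Prop :=
  k < Fintype.card V ∧
    ∀ S : Finset V, S.card < k → (G.induce ((↑S : Set V)ᶜ)).Connected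

/-- vertex connectivity `κ`. -/
noncomputable def connectivity (G : SimpleGraph V) [Fintype V] : ℕ :=
  sSup {k | KConnected G k}

/-- independence number `α`. -/
noncomputable def indepNumber (G : SimpleGraph V) [Fintype V] : ℕ :=
  sSup {k | ∃ s : Finset V, (∀ u ∈ s, ∀ v ∈ s, ¬ G.Adj u v) ∧ s.card = k}

/-- circumference `c`: length of a longest cycle. -/
noncomputable def circumference (G : SimpleGraph V) [Fintype V] : ℕ :=
  sSup {n | ∃ (v : V) (w : G.Walk v v), w.IsCycle ∧ w.length = n}

/-- `w` is a longest cycle of `G`. -/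
def IsLongestCycle {G : SimpleGraph V} {v : V} (w : G.Walk v v) : Prop :=
  w.IsCycle ∧ ∀ (u : V) (w' : G.Walk u u), w'.IsCycle → w'.length ≤ w.length

/-- dominating cycle: every edge has an endpoint on the cycle. -/
def IsDominatingCycle {G : SimpleGraph V} {v : V} (w : G.Walk v v) : Prop :=
  w.IsCycle ∧ ∀ x y, G.Adj x y → x ∈ w.support ∨ y ∈ w.support

/-- generalized cycle of length `n` with vertex set `W`: single vertices are
cycles of length 1, edges are cycles of length 2. -/
def ExtCycle (G : SimpleGraph V) (W : Set V) (n : ℕ) : Prop :=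
  (n = 1 ∧ ∃ v : V, W = {v}) ∨
  (n = 2 ∧ ∃ u v : V, G.Adj u v ∧ W = {u, v}) ∨
  (3 ≤ n ∧ ∃ (v : V) (w : G.Walk v v), w.IsCycle ∧ w.length = n ∧
      W = {x | x ∈ w.support})

/-- `p̄`: the length of a longest path in `G \ C`. -/
noncomputable def pathBar (G : SimpleGraph V) [Fintype V] {v : V} (w : G.Walk v v) : ℕ :=
  sSup {n | ∃ (a b : {x : V | x ∉ w.support})
      (p : (G.induce {x : V | x ∉ w.support}).Walk a b), p.IsPath ∧ p.length = n}

/-- `c̄`: the length of a longest (generalized) cycle in `G \ C`. -/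
noncomputable def cycBar (G : SimpleGraph V) [Fintype V] {v : V} (w : G.Walk v v) : ℕ :=
  sSup {n | ∃ W, ExtCycle (G.induce {x : V | x ∉ w.support}) W n}

/-- `CD_m`-cycle: every (generalized) cycle of length at least `m` meets `w`. -/
def IsCDCycle (G : SimpleGraph V) {v : V} (w : G.Walk v v) (m : ℕ) : Prop :=
  w.IsCycle ∧ ∀ (W : Set V) (n : ℕ), ExtCycle G W n → m ≤ n → ∃ x ∈ W, x ∈ w.support

namespace LongCycle

/-- `P` lists the vertices of a path of `G` from `a` to `b`. -/
def PathList (G : SimpleGraph V) (a : V) (P : List V) (b : V) : Prop :=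
  P.Nodup ∧ P.IsChain G.Adj ∧ P.head? = some a ∧ P.getLast? = some b

/-- `L` lists the vertices of a generalized cycle (a vertex, an edge or a cycle) in cyclic order. -/
def GenCycle (G : SimpleGraph V) (L : List V) : Prop :=
  ∃ a b, PathList G a L b ∧ (2 ≤ L.length → G.Adj b a)

variable {G : SimpleGraph V} {a b c d : V} {P Q : List V}

lemma PathList.ne_nil (h : PathList G a P b) : P ≠ [] := by
  rintro rfl; simpa using h.2.2.1

lemma PathList.length_pos (h : PathList G a P b) : 0 < P.length :=
  List.length_pos_of_ne_nil h.ne_nil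

lemma PathList.head_mem (h : PathList G a P b) : a ∈ P := List.mem_of_mem_head? h.2.2.1

lemma PathList.last_mem (h : PathList G a P b) : b ∈ P := List.mem_of_mem_getLast? h.2.2.2

lemma PathList.single (a : V) : PathList G a [a] a := by simp [PathList]

lemma PathList.reverse (h : PathList G a P b) : PathList G b P.reverse a := by
  refine ⟨List.nodup_reverse.2 h.1, ?_, by simp [h.2.2.2], by simp [h.2.2.1]⟩
  rw [List.isChain_reverse]
  exact h.2.1.imp fun _ _ h => h.symm

lemma PathList.append (h : PathList G a P b) (h' : PathList G c Q d) (hbc : G.Adj b c)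
    (hd : ∀ x ∈ P, x ∉ Q) : PathList G a (P ++ Q) d := by
  refine ⟨List.nodup_append'.2 ⟨h.1, h'.1, fun x hx hx' => hd x hx hx'⟩, ?_, ?_, ?_⟩
  · rw [List.isChain_append]
    refine ⟨h.2.1, h'.2.1, ?_⟩
    intro x hx y hy
    rw [h.2.2.2] at hx; rw [h'.2.2.1] at hy
    simp at hx hy; subst hx hy; exact hbc
  · rw [List.head?_append, h.2.2.1]; rfl
  · rw [List.getLast?_append, h'.2.2.2]; rfl

lemma PathList.cons (h : PathList G a P b) (hbc : G.Adj c a) (hd : c ∉ P) :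
    PathList G c (c :: P) b :=
  (PathList.single c).append h hbc (by simpa using hd)

lemma PathList.concat (h : PathList G a P b) (hbc : G.Adj b c) (hd : c ∉ P) :
    PathList G a (P ++ [c]) c :=
  h.append (PathList.single c) hbc (by intro x hx; simp; rintro rfl; exact hd hx)

/-- From a list of a decomposed chain to its parts. -/
lemma PathList.split_left (h : PathList G a (P ++ c :: Q) b) : PathList G a (P ++ [c]) c := by
  obtain ⟨h1, h2, h3, h4⟩ := h
  have e : P ++ c :: Q = (P ++ [c]) ++ Q := by simp
  rw [e] at h1 h2 h3
  refine ⟨(List.nodup_append'.1 h1).1, (List.isChain_append.1 h2).1, ?_, by simp⟩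
  rw [List.head?_append_of_ne_nil _ (by simp)] at h3
  exact h3

lemma PathList.split_right (h : PathList G a (P ++ c :: Q) b) : PathList G c (c :: Q) b := by
  obtain ⟨h1, h2, h3, h4⟩ := h
  refine ⟨(List.nodup_append'.1 h1).2.1, (List.isChain_append.1 h2).2.1, by simp, ?_⟩
  rw [List.getLast?_append_of_ne_nil _ (by simp)] at h4
  exact h4

lemma PathList.adj_of_append_cons (h : PathList G a (P ++ b :: c :: Q) d) : G.Adj b c := by
  have := h.2.1
  rw [List.isChain_append] at this
  exact (List.isChain_cons_cons.1 this.2.1).1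

lemma exists_pathList_of_isChain {L : List V} (hL : L ≠ []) (hn : L.Nodup)
    (hc : L.IsChain G.Adj) : ∃ a b, PathList G a L b :=
  ⟨L.head hL, L.getLast hL, hn, hc, List.head?_eq_some_head hL, List.getLast?_eq_some_getLast hL⟩

/-! ### Cyclic sequences -/

/-- `f` runs periodically around a generalized cycle with `N` vertices in `X`, and no generalized
cycle inside `X` has more than `N` vertices. -/
structure MaxCycle (G : SimpleGraph V) (X : Set V) (N : ℕ) (f : ℕ → V) : Prop where
  pos : 0 < N
  per : ∀ p, f (p + N) = f p
  inj : ∀ p q, p < N → q < N → f p = f q → p = q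
  adj : 2 ≤ N → ∀ p, G.Adj (f p) (f (p + 1))
  mem : ∀ p, f p ∈ X
  max : ∀ L, GenCycle G L → (∀ x ∈ L, x ∈ X) → L.length ≤ N

/-- The arc `f s, f (s+1), …` with `len` vertices. -/
def arc (f : ℕ → V) (s len : ℕ) : List V := (List.range' s len).map f

@[simp] lemma length_arc (f : ℕ → V) (s len : ℕ) : (arc f s len).length = len := by simp [arc]

lemma mem_arc {f : ℕ → V} {s len : ℕ} {x : V} :
    x ∈ arc f s len ↔ ∃ q, s ≤ q ∧ q < s + len ∧ f q = x := by
  simp [arc, List.mem_range'_1, and_assoc]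

lemma mem_range_of_mem_arc {f : ℕ → V} {s len : ℕ} {x : V} (hx : x ∈ arc f s len) :
    x ∈ Set.range f := by
  obtain ⟨q, -, -, rfl⟩ := mem_arc.1 hx; exact ⟨q, rfl⟩

namespace MaxCycle

variable {X : Set V} {N : ℕ} {f : ℕ → V}

lemma map_mod (h : MaxCycle G X N f) (p : ℕ) : f (p % N) = f p := by
  conv_rhs => rw [← Nat.mod_add_div p N]
  generalize p / N = k
  induction k with
  | zero => simp
  | succ k ih => rw [Nat.mul_succ, ← Nat.add_assoc, h.per]; exact ih

lemma eq_iff (h : MaxCycle G X N f) {p q : ℕ} : f p = f q ↔ p % N = q % N := by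
  rw [← h.map_mod p, ← h.map_mod q]
  exact ⟨h.inj _ _ (Nat.mod_lt _ h.pos) (Nat.mod_lt _ h.pos), fun e => by rw [e]⟩

lemma eq_of_lt (h : MaxCycle G X N f) {p q : ℕ} (hpq : p ≤ q) (hq : q < p + N)
    (e : f p = f q) : p = q := by
  rw [h.eq_iff] at e
  have h1 : (q - p) % N = 0 := by
    have := (Nat.modEq_iff_dvd' hpq).1 e
    exact Nat.mod_eq_zero_of_dvd this
  rw [Nat.mod_eq_of_lt (by omega)] at h1
  omega

lemma ne_of_lt (h : MaxCycle G X N f) {p q : ℕ} (hpq : p < q) (hq : q < p + N) : f p ≠ f q :=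
  fun e => by have := h.eq_of_lt hpq.le hq e; omega

/-- Every cycle vertex occurs at a unique position in any window. -/
lemma exists_pos (h : MaxCycle G X N f) (s p : ℕ) : ∃ q, s ≤ q ∧ q < s + N ∧ f q = f p := by
  have hN := h.pos
  refine ⟨s + (p + s * N - s) % N, by omega, by have := Nat.mod_lt (p + s * N - s) hN; omega, ?_⟩
  rw [h.eq_iff, Nat.add_mod_mod]
  have : s ≤ s * N := Nat.le_mul_of_pos_right s hN
  rw [show s + (p + s * N - s) = p + s * N by omega, Nat.add_mul_mod_self_right]

lemma arc_pathList (h : MaxCycle G X N f) {s e len : ℕ} (hl : 1 ≤ len) (hN : len ≤ N)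
    (he : e + 1 = s + len) : PathList G (f s) (arc f s len) (f e) := by
  refine ⟨?_, ?_, ?_, ?_⟩
  · refine List.Nodup.map_on ?_ (List.nodup_range')
    intro x hx y hy e
    rw [List.mem_range'_1] at hx hy
    rcases le_total x y with hxy | hxy
    · exact h.eq_of_lt hxy (by omega) e
    · exact (h.eq_of_lt hxy (by omega) e.symm).symm
  · rw [List.isChain_iff_getElem]
    intro i hi
    simp [arc] at hi ⊢
    exact h.adj (by omega) _
  · obtain ⟨m, rfl⟩ : ∃ m, len = m + 1 := ⟨len - 1, by omega⟩
    simp [arc, List.range'_succ]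
  · obtain ⟨m, rfl⟩ : ∃ m, len = m + 1 := ⟨len - 1, by omega⟩
    rw [arc, List.range'_concat]
    simp; congr 1; omega

lemma le_of_pathList (h : MaxCycle G X N f) (hP : PathList G a P b) (hab : G.Adj b a)
    (hX : ∀ x ∈ P, x ∈ X) : P.length ≤ N :=
  h.max _ ⟨a, b, hP, fun _ => hab⟩ hX

/-- A path outside the cycle whose ends attach to cycle vertices `k` steps apart has
fewer than `k` vertices. -/
lemma insert_le (h : MaxCycle G X N f) {p k : ℕ} (hk : 1 ≤ k) (hkN : k ≤ N)
    (hP : PathList G a P b) (hX : ∀ x ∈ P, x ∈ X) (hC : ∀ x ∈ P, x ∉ Set.range f)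
    (ha : G.Adj (f p) a) (hb : G.Adj b (f (p + k))) : P.length + 1 ≤ k := by
  have h1 := (h.arc_pathList (s := p + k) (e := p + N) (len := N - k + 1) (by omega) (by omega)
    (by omega)).append hP (by rw [h.per]; exact ha)
    (fun x hx hx' => hC x hx' (mem_range_of_mem_arc hx))
  have h2 := h.le_of_pathList h1 hb (by
    intro x hx
    rcases List.mem_append.1 hx with hx | hx
    · obtain ⟨q, rfl⟩ := mem_range_of_mem_arc hx; exact h.mem q
    · exact hX x hx)
  simp at h2
  omega

lemma arc_disjoint (h : MaxCycle G X N f) {s len s' len' : ℕ} (h1 : s + len ≤ s')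
    (h2 : s' + len' ≤ s + N) : ∀ x ∈ arc f s len, x ∉ arc f s' len' := by
  intro x hx hx'
  obtain ⟨q, hq, hq', rfl⟩ := mem_arc.1 hx
  obtain ⟨r, hr, hr', e⟩ := mem_arc.1 hx'
  exact h.ne_of_lt (p := q) (q := r) (by omega) (by omega) e.symm

end MaxCycle

namespace MaxCycle
variable {N : ℕ} {f : ℕ → V}

lemma crossing_le (h : MaxCycle G Set.univ N f) {o t s : ℕ} (hot : o + 1 ≤ t) (hs : 1 ≤ s)
    (hts : t + s ≤ o + N) (hP : PathList G a P b) (hC : ∀ x ∈ P, x ∉ Set.range f)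
    (ha : G.Adj (f o) a) (hb : G.Adj b (f t)) (hadj : G.Adj (f (o + 1)) (f (t + s))) :
    P.length + 1 ≤ s := by
  have h1 := (h.arc_pathList (s := t + s) (e := o + N) (len := o + N - (t + s) + 1) (by omega)
    (by omega) (by omega)).append hP (by rw [h.per]; exact ha)
    (fun x hx hx' => hC x hx' (mem_range_of_mem_arc hx))
  have h2 := (h.arc_pathList (s := o + 1) (e := t) (len := t - o) (by omega) (by omega)
    (by omega)).reverse
  have h3 := h1.append h2 hb (by
    intro x hx hx'
    rw [List.mem_reverse] at hx'
    rcases List.mem_append.1 hx with hx | hx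
    · exact h.arc_disjoint (by omega) (by omega) x hx' hx
    · exact hC x hx (mem_range_of_mem_arc hx'))
  have h4 := h.le_of_pathList h3 hadj (by simp)
  simp at h4
  omega

lemma double_crossing_le (h : MaxCycle G Set.univ N f) {o g t s : ℕ} (hg : 1 ≤ g)
    (hot : o + g + 1 ≤ t) (hs : 1 ≤ s)
    (hts : t + s ≤ o + N) (hP : PathList G a P b) (hC : ∀ x ∈ P, x ∉ Set.range f)
    (ha : G.Adj (f o) a) (hb : G.Adj b (f (o + g))) (hadj : G.Adj (f (o + 1)) (f t))
    (hadj' : G.Adj (f (o + g + 1)) (f (t + s))) :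
    P.length + 1 ≤ s := by
  have h1 := (h.arc_pathList (s := t + s) (e := o + N) (len := o + N - (t + s) + 1) (by omega)
    (by omega) (by omega)).append hP (by rw [h.per]; exact ha)
    (fun x hx hx' => hC x hx' (mem_range_of_mem_arc hx))
  have h2 := (h.arc_pathList (s := o + 1) (e := o + g) (len := g) (by omega) (by omega)
    (by omega)).reverse
  have h2' := (h.arc_pathList (s := o + g + 1) (e := t) (len := t - o - g) (by omega) (by omega)
    (by omega)).reverse
  have h3 := (h1.append h2 hb (by
    intro x hx hx'
    rw [List.mem_reverse] at hx'
    rcases List.mem_append.1 hx with hx | hx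
    · exact h.arc_disjoint (by omega) (by omega) x hx' hx
    · exact hC x hx (mem_range_of_mem_arc hx'))).append h2' hadj (by
    intro x hx hx'
    rw [List.mem_reverse] at hx'
    simp only [List.mem_append, List.mem_reverse] at hx
    rcases hx with (hx | hx) | hx
    · exact h.arc_disjoint (by omega) (by omega) x hx' hx
    · exact hC x hx (mem_range_of_mem_arc hx')
    · exact h.arc_disjoint (by omega) (by omega) x hx hx')
  have h4 := h.le_of_pathList h3 hadj' (by simp)
  simp at h4
  omega

lemma no_common_successor_nbr (h : MaxCycle G Set.univ N f) {o g : ℕ} {z : V} (hg : 1 ≤ g)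
    (hgN : g < N) (hP : PathList G a P b) (hC : ∀ x ∈ P, x ∉ Set.range f)
    (ha : G.Adj (f o) a) (hb : G.Adj b (f (o + g))) (hz : z ∉ Set.range f) (hzP : z ∉ P)
    (hadj : G.Adj (f (o + 1)) z) (hadj' : G.Adj (f (o + g + 1)) z) : False := by
  have h1 := (h.arc_pathList (s := o + g + 1) (e := o + N) (len := N - g) (by omega)
    (by omega) (by omega)).append hP (by rw [h.per]; exact ha)
    (fun x hx hx' => hC x hx' (mem_range_of_mem_arc hx))
  have h2 := (h.arc_pathList (s := o + 1) (e := o + g) (len := g) (by omega) (by omega)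
    (by omega)).reverse
  have h3 := (h1.append h2 hb (by
    intro x hx hx'
    rw [List.mem_reverse] at hx'
    rcases List.mem_append.1 hx with hx | hx
    · exact h.arc_disjoint (by omega) (by omega) x hx' hx
    · exact hC x hx (mem_range_of_mem_arc hx'))).concat hadj (by
    simp only [List.mem_append, List.mem_reverse]
    rintro ((hx | hx) | hx)
    · exact hz (mem_range_of_mem_arc hx)
    · exact hzP hx
    · exact hz (mem_range_of_mem_arc hx))
  have h4 := h.le_of_pathList h3 hadj'.symm (by simp)
  have := hP.length_pos
  simp at h4
  omega

end MaxCycle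

end LongCycle

namespace LongCycle

variable {G : SimpleGraph V} {a b c d : V} {P Q : List V}

/-- A path from `A` to `B` contains one meeting `A` and `B` only in its ends. -/
lemma PathList.exists_trim {A B : Set V} (n : ℕ) : ∀ {a b : V} {P : List V}, P.length ≤ n →
    PathList G a P b → a ∈ A → b ∈ B →
    ∃ a' P' b', PathList G a' P' b' ∧ a' ∈ A ∧ b' ∈ B ∧ P' ⊆ P ∧
      ∀ x ∈ P', (x ∈ A → x = a') ∧ (x ∈ B → x = b') := by
  induction n with
  | zero =>
    intro a b P hn h
    have := h.length_pos
    omega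
  | succ n ih =>
    intro a b P hn h ha hb
    by_cases hA : ∃ x ∈ P, x ∈ A ∧ x ≠ a
    · obtain ⟨x, hx, hxA, hxa⟩ := hA
      obtain ⟨P1, P2, rfl⟩ := List.append_of_mem hx
      have hP1 : P1 ≠ [] := by
        rintro rfl
        have := h.2.2.1
        simp at this; exact hxa this
      have hl := List.length_pos_of_ne_nil hP1
      obtain ⟨a', P', b', h1, h2, h3, h4, h5⟩ := ih (by simp at hn ⊢; omega) h.split_right hxA hb
      exact ⟨a', P', b', h1, h2, h3, fun y hy => List.mem_append_right _ (h4 hy), h5⟩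
    by_cases hB : ∃ x ∈ P, x ∈ B ∧ x ≠ b
    · obtain ⟨x, hx, hxB, hxb⟩ := hB
      obtain ⟨P1, P2, rfl⟩ := List.append_of_mem hx
      have hP2 : P2 ≠ [] := by
        rintro rfl
        have := h.2.2.2
        simp at this; exact hxb this
      have hl := List.length_pos_of_ne_nil hP2
      obtain ⟨a', P', b', h1, h2, h3, h4, h5⟩ := ih (by simp at hn ⊢; omega) h.split_left ha hxB
      refine ⟨a', P', b', h1, h2, h3, fun y hy => ?_, h5⟩
      have := h4 hy
      simp at this ⊢; tauto
    push Not at hA hB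
    exact ⟨a, P, b, h, ha, hb, fun _ => id, fun x hx => ⟨hA x hx, hB x hx⟩⟩

section Menger

variable [Fintype V]

/-- One step of a linkage from `A` to `B`, the extra elements serving as sources and sinks. -/
def linkStep (G : SimpleGraph V) (A B : Finset V) (k : ℕ) : V ⊕ Fin k → V ⊕ Fin k → Prop
  | .inl v, .inl w => v = w ∨ G.Adj v w
  | .inr _, .inl w => w ∈ A
  | .inl v, .inr _ => v ∈ B
  | .inr _, .inr _ => False

open Classical in
lemma le_card_boundary {k : ℕ} (hG : KConnected G k) {A B : Finset V} (hA : k ≤ A.card)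
    (hB : k ≤ B.card) (Y : Finset V) (hY : ∀ y ∈ Y, y ∉ B) :
    k ≤ (Finset.univ.filter fun w => (w ∈ A ∨ ∃ y ∈ Y, G.Adj y w) ∧ w ∉ Y).card := by
  by_contra! hlt
  set S := Finset.univ.filter fun w => (w ∈ A ∨ ∃ y ∈ Y, G.Adj y w) ∧ w ∉ Y with hS
  obtain ⟨x, hxA, hxS⟩ := Finset.exists_mem_notMem_of_card_lt_card (hlt.trans_le hA)
  obtain ⟨z, hzB, hzS⟩ := Finset.exists_mem_notMem_of_card_lt_card (hlt.trans_le hB)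
  have hxY : x ∈ Y := by by_contra h; exact hxS (by simp [hS, hxA, h])
  obtain ⟨W⟩ := (hG.2 S hlt).preconnected ⟨x, by simpa using hxS⟩ ⟨z, by simpa using hzS⟩
  have key : ∀ (u v : ((↑S : Set V)ᶜ : Set V)), (G.induce ((↑S : Set V)ᶜ)).Walk u v →
      u.1 ∈ Y → v.1 ∈ Y := by
    intro u v W
    induction W with
    | nil => exact id
    | @cons u w v h _ ih =>
      intro hu
      apply ih
      by_contra hw
      have h1 : w.1 ∉ S := fun h => w.2 (Finset.mem_coe.2 h)
      exact h1 (by simp [hS, hw]; exact Or.inr ⟨u, hu, by simpa using h⟩)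
  exact hY _ (key _ _ W hxY) hzB

lemma exists_linkStep_injective {k : ℕ} (hG : KConnected G k) {A B : Finset V}
    (hA : k ≤ A.card) (hB : k ≤ B.card) :
    ∃ f : V ⊕ Fin k → V ⊕ Fin k, Function.Injective f ∧ ∀ x, linkStep G A B k x (f x) := by
  classical
  rw [← Fintype.all_card_le_filter_rel_iff_exists_injective]
  intro X
  have hX : X.toLeft.card + X.toRight.card = X.card := Finset.card_toLeft_add_card_toRight
  rcases Finset.eq_empty_or_nonempty X.toRight with hZ | ⟨i, hi⟩
  · apply Finset.card_le_card
    rintro (v | i) hx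
    · simp only [Finset.mem_filter, Finset.mem_univ, true_and]
      exact ⟨_, hx, Or.inl rfl⟩
    · have : i ∈ X.toRight := by simpa using hx
      simp [hZ] at this
  have hZk : X.toRight.card ≤ k := by simpa using Finset.card_le_univ X.toRight
  by_cases hYB : ∃ y ∈ X.toLeft, y ∈ B
  · obtain ⟨y, hy, hyB⟩ := hYB
    have : (X.toLeft.disjSum (Finset.univ : Finset (Fin k))).card ≤ _ := Finset.card_le_card
      (t := Finset.univ.filter fun b => ∃ a ∈ X, linkStep G A B k a b) (by
        rintro (v | j) hx
        · simp only [Finset.mem_filter, Finset.mem_univ, true_and]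
          exact ⟨.inl v, by simpa using hx, Or.inl rfl⟩
        · simp only [Finset.mem_filter, Finset.mem_univ, true_and]
          exact ⟨.inl y, by simpa using hy, hyB⟩)
    rw [Finset.card_disjSum, Finset.card_univ, Fintype.card_fin] at this
    omega
  · push Not at hYB
    have h1 := le_card_boundary hG hA hB X.toLeft hYB
    set S := Finset.univ.filter fun w => (w ∈ A ∨ ∃ y ∈ X.toLeft, G.Adj y w) ∧ w ∉ X.toLeft
      with hS
    have hd : Disjoint X.toLeft S := by
      rw [Finset.disjoint_left]; intro w hw hw'; simp [hS] at hw hw'; exact hw'.2 hw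
    have : ((X.toLeft ∪ S).map Function.Embedding.inl).card ≤ _ := Finset.card_le_card
      (t := Finset.univ.filter fun b => ∃ a ∈ X, linkStep G A B k a b) (by
        intro x hx
        simp only [Finset.mem_map, Finset.mem_union, Function.Embedding.inl_apply] at hx
        obtain ⟨w, hw, rfl⟩ := hx
        simp only [Finset.mem_filter, Finset.mem_univ, true_and]
        rcases hw with hw | hw
        · exact ⟨.inl w, by simpa using hw, Or.inl rfl⟩
        · simp only [hS, Finset.mem_filter, Finset.mem_univ, true_and] at hw
          rcases hw.1 with hw | ⟨y, hy, hyw⟩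
          · exact ⟨.inr i, by simpa using hi, hw⟩
          · exact ⟨.inl y, by simpa using hy, Or.inr hyw⟩)
    rw [Finset.card_map, Finset.card_union_of_disjoint hd] at this
    omega

/-- The theorem of Menger for a `k`-connected graph. -/
theorem exists_linkage {k : ℕ} (hG : KConnected G k) {A B : Finset V}
    (hA : k ≤ A.card) (hB : k ≤ B.card) :
    ∃ (s e : Fin k → V) (R : Fin k → List V), (∀ i, PathList G (s i) (R i) (e i)) ∧
      (∀ i, s i ∈ A) ∧ (∀ i, e i ∈ B) ∧
      (∀ i, ∀ x ∈ R i, (x ∈ A → x = s i) ∧ (x ∈ B → x = e i)) ∧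
      ∀ i j, i ≠ j → ∀ x ∈ R i, x ∉ R j := by
  classical
  obtain ⟨f, hf, hstep⟩ := exists_linkStep_injective hG hA hB
  have hret : ∀ i : Fin k, ∃ m, 1 ≤ m ∧ (f^[m] (.inr i)).isRight := by
    intro i
    have hper := Function.Injective.mem_periodicPts hf (Sum.inr i : V ⊕ Fin k)
    obtain ⟨m, hm, hm'⟩ := hper
    exact ⟨m, hm, by rw [hm']; rfl⟩
  choose! m hm using fun i => (⟨_, Nat.find_spec (hret i), fun n => Nat.find_min (hret i)⟩ :
    ∃ m, (1 ≤ m ∧ (f^[m] (.inr i)).isRight) ∧ ∀ n < m, ¬ (1 ≤ n ∧ (f^[n] (.inr i)).isRight))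
  have hx : ∀ i n, 1 ≤ n → n < m i → ∃ v, f^[n] (.inr i) = Sum.inl v := by
    intro i n hn hn'
    have := (hm i).2 n hn'
    rcases h : f^[n] (Sum.inr i) with v | j
    · exact ⟨v, rfl⟩
    · simp [h] at this; omega
  have hcancel : ∀ i i' n n', n ≤ n' → n' < m i' →
      f^[n] (.inr i) = f^[n'] (.inr i') → n = n' ∧ i = i' := by
    intro i i' n n' hnn hn' he
    obtain ⟨r, rfl⟩ := Nat.exists_eq_add_of_le hnn
    rw [Function.iterate_add_apply] at he
    have := hf.iterate n he
    rcases Nat.eq_zero_or_pos r with rfl | hr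
    · simpa using this
    · obtain ⟨v, hv⟩ := hx i' r hr (by omega)
      rw [hv] at this; simp at this
  have hm2 : ∀ i, 2 ≤ m i := by
    intro i
    by_contra hlt
    have h1 : m i = 1 := by have := (hm i).1.1; omega
    have h2 := (hm i).1.2
    have h3 := hstep (.inr i)
    rw [h1] at h2
    rcases h : f (Sum.inr i) with v | j
    · simp [h] at h2
    · rw [h] at h3; exact h3
  have hstart : ∀ i, ∃ v ∈ A, f^[1] (.inr i) = Sum.inl v := by
    intro i
    obtain ⟨v, hv⟩ := hx i 1 le_rfl (hm2 i)
    have := hstep (.inr i)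
    rw [show f (.inr i) = Sum.inl v from hv] at this
    exact ⟨v, this, hv⟩
  have hpath : ∀ i n, 1 ≤ n → n < m i → ∃ (L : List V) (a b : V), PathList G a L b ∧ a ∈ A ∧
      f^[n] (.inr i) = Sum.inl b ∧ ∀ x ∈ L, ∃ n', 1 ≤ n' ∧ n' ≤ n ∧ f^[n'] (.inr i) = Sum.inl x := by
    intro i n hn
    induction n, hn using Nat.le_induction with
    | base =>
      intro _
      obtain ⟨v, hv, hv'⟩ := hstart i
      exact ⟨[v], v, v, PathList.single v, hv, hv', by
        intro x hx; simp at hx; subst hx; exact ⟨1, le_rfl, le_rfl, hv'⟩⟩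
    | succ n hn ih =>
      intro hlt
      obtain ⟨L, a, b, h1, h2, h3, h4⟩ := ih (by omega)
      obtain ⟨v, hv⟩ := hx i (n + 1) (by omega) hlt
      have hst := hstep (.inl b)
      have hv2 : f (.inl b) = Sum.inl v := by
        rw [← h3, ← hv, Function.iterate_succ_apply']
      rw [hv2] at hst
      have hne : v ∉ L := by
        intro hvL
        obtain ⟨n', hn1, hn2, hn3⟩ := h4 v hvL
        have := (hcancel i i n' (n + 1) (by omega) hlt (hn3.trans hv.symm)).1
        omega
      refine ⟨L ++ [v], a, v, h1.concat ?_ hne, h2, hv, ?_⟩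
      · rcases hst with rfl | h
        · exact absurd h1.last_mem hne
        · exact h
      · intro x hx
        rw [List.mem_append] at hx
        rcases hx with hx | hx
        · obtain ⟨n', hn1, hn2, hn3⟩ := h4 x hx
          exact ⟨n', hn1, by omega, hn3⟩
        · simp at hx; subst hx; exact ⟨n + 1, by omega, le_rfl, hv⟩
  have hfull : ∀ i, ∃ (s : V) (R : List V) (e : V), PathList G s R e ∧ s ∈ A ∧ e ∈ B ∧
      (∀ x ∈ R, (x ∈ A → x = s) ∧ (x ∈ B → x = e)) ∧
      ∀ x ∈ R, ∃ n', 1 ≤ n' ∧ n' < m i ∧ f^[n'] (.inr i) = Sum.inl x := by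
    intro i
    have h2 := hm2 i
    obtain ⟨L, a, b, h1, ha, hb, h4⟩ := hpath i (m i - 1) (by omega) (by omega)
    have hbB : b ∈ B := by
      have hst := hstep (.inl b)
      have h5 := (hm i).1.2
      rw [show m i = (m i - 1) + 1 by omega, Function.iterate_succ_apply', hb] at h5
      rcases h : f (Sum.inl b) with v | j
      · simp [h] at h5
      · rw [h] at hst; exact hst
    obtain ⟨s, R, e, g1, g2, g3, g4, g5⟩ := PathList.exists_trim (A := (A : Set V))
      (B := (B : Set V)) _ le_rfl h1 (by simpa using ha) (by simpa using hbB)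
    refine ⟨s, R, e, g1, by simpa using g2, by simpa using g3, by simpa using g5, ?_⟩
    intro x hx
    obtain ⟨n', hn1, hn2, hn3⟩ := h4 x (g4 hx)
    exact ⟨n', hn1, by omega, hn3⟩
  choose s R e h1 h2 h3 h4 h5 using hfull
  refine ⟨s, e, R, h1, h2, h3, h4, ?_⟩
  intro i j hij x hxi hxj
  obtain ⟨n, hn1, hn2, hn3⟩ := h5 i x hxi
  obtain ⟨n', hn1', hn2', hn3'⟩ := h5 j x hxj
  rcases le_total n n' with h | h
  · exact hij (hcancel i j n n' h hn2' (hn3.trans hn3'.symm)).2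
  · exact hij (hcancel j i n' n h hn2 (hn3'.trans hn3.symm)).2.symm

end Menger
end LongCycle

namespace LongCycle

variable {G : SimpleGraph V} {a b c d : V} {P Q : List V}

/-- Glue two paths at a common end. -/
lemma PathList.join (h : PathList G a P b) (hcb : PathList G b (b :: Q) c)
    (hd : ∀ x ∈ P, x ∉ Q) : PathList G a (P ++ Q) c := by
  rcases Q with _ | ⟨y, Q⟩
  · have : b = c := by simpa using hcb.2.2.2
    simpa [this] using h
  · refine h.append (c := y) ?_ (PathList.adj_of_append_cons (P := []) hcb) hd
    exact PathList.split_right (P := [b]) hcb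

/-- A path through the middle of three legs meeting at `s` and `t`. -/
lemma PathList.detour {s t l l' : V} {L M L' : List V} (h1 : PathList G s (s :: L) l)
    (h2 : PathList G s M t) (h3 : PathList G t (t :: L') l') (hLM : ∀ x ∈ L, x ∉ M)
    (hLM' : ∀ x ∈ L', x ∉ M) (hLL : ∀ x ∈ L, x ∉ L') :
    PathList G l (L.reverse ++ M ++ L') l' := by
  have hs : s ∉ L := (List.nodup_cons.1 h1.1).1
  obtain ⟨y, M', rfl⟩ := List.exists_cons_of_ne_nil h2.ne_nil
  obtain rfl : y = s := by simpa using h2.2.2.1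
  have h4 := h1.reverse.join h2 (by
    intro x hx hx'
    simp only [List.mem_reverse, List.mem_cons] at hx
    rcases hx with rfl | hx
    · exact (List.nodup_cons.1 h2.1).1 hx'
    · exact hLM x hx (by simp [hx']))
  have h5 := h4.join h3 (by
    intro x hx hx'
    simp only [List.reverse_cons, List.mem_append, List.mem_reverse, List.mem_singleton]
      at hx
    rcases hx with (hx | rfl) | hx
    · exact hLL x hx hx'
    · exact hLM' x hx' (by simp)
    · exact hLM' x hx' (by simp [hx]))
  simpa using h5

/-- `x` and `y` are connected outside of `S`. -/
def JoinedOff (G : SimpleGraph V) (S : Set V) : V → V → Prop :=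
  Relation.ReflTransGen fun u v => G.Adj u v ∧ u ∉ S ∧ v ∉ S

lemma JoinedOff.symm {S : Set V} {x y : V} (h : JoinedOff G S x y) : JoinedOff G S y x :=
  have : Std.Symm fun u v => G.Adj u v ∧ u ∉ S ∧ v ∉ S := ⟨fun _ _ h => ⟨h.1.symm, h.2.2, h.2.1⟩⟩
  (Relation.ReflTransGen.stdSymm (r := fun u v => G.Adj u v ∧ u ∉ S ∧ v ∉ S)).symm _ _ h

lemma JoinedOff.exists_pathList {S : Set V} {x y : V} (h : JoinedOff G S x y) (hx : x ∉ S) :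
    ∃ P, PathList G x P y ∧ ∀ z ∈ P, z ∉ S := by
  induction h with
  | refl => exact ⟨[x], PathList.single x, by simpa using hx⟩
  | @tail y z _ hyz ih =>
    obtain ⟨P, hP, hPS⟩ := ih
    by_cases hz : z ∈ P
    · obtain ⟨P1, P2, rfl⟩ := List.append_of_mem hz
      exact ⟨_, hP.split_left, fun w hw => hPS w (by simp at hw ⊢; tauto)⟩
    · refine ⟨_, hP.concat hyz.1 hz, ?_⟩
      intro w hw
      rw [List.mem_append, List.mem_singleton] at hw
      rcases hw with hw | rfl
      · exact hPS w hw
      · exact hyz.2.2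

lemma JoinedOff.of_isChain {S : Set V} : ∀ {L : List V} {a : V}, (a :: L).IsChain G.Adj →
    (∀ x ∈ a :: L, x ∉ S) → ∀ x ∈ a :: L, JoinedOff G S a x
  | [], a, _, _, x, hx => by
    simp at hx; subst hx; exact Relation.ReflTransGen.refl
  | y :: L, a, hc, hS, x, hx => by
    rw [List.isChain_cons_cons] at hc
    rcases List.mem_cons.1 hx with rfl | hx
    · exact Relation.ReflTransGen.refl
    · exact Relation.ReflTransGen.head ⟨hc.1, hS a (by simp), hS y (by simp)⟩
        (JoinedOff.of_isChain hc.2 (fun z hz => hS z (List.mem_cons_of_mem _ hz)) x hx)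

lemma PathList.joinedOff {S : Set V} (h : PathList G a P b) (hS : ∀ x ∈ P, x ∉ S) {x : V}
    (hx : x ∈ P) : JoinedOff G S a x := by
  obtain ⟨y, P', rfl⟩ := List.exists_cons_of_ne_nil h.ne_nil
  obtain rfl : y = a := by simpa using h.2.2.1
  exact JoinedOff.of_isChain h.2.1 hS x hx

/-- A path with distinct ends, with both ends split off. -/
lemma PathList.exists_eq_cons_concat (h : PathList G a P b) (hab : a ≠ b) :
    ∃ L l, P = a :: L ++ [b] ∧ PathList G a (a :: L) l ∧ G.Adj l b := by
  have h' := h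
  obtain ⟨y, P', rfl⟩ := List.exists_cons_of_ne_nil h.ne_nil
  obtain rfl : y = a := by simpa using h.2.2.1
  rcases List.eq_nil_or_concat P' with rfl | ⟨L, z, rfl⟩
  · exact absurd (by simpa using h.2.2.2) hab
  · obtain rfl : z = b := by
      have := h.2.2.2
      rw [List.concat_eq_append, ← List.cons_append, List.getLast?_append] at this
      simpa using this
    rw [List.concat_eq_append, ← List.cons_append] at h
    refine ⟨L, (y :: L).getLast (by simp), by simp, ⟨?_, ?_, by simp, ?_⟩, ?_⟩
    · exact (List.nodup_append'.1 h.1).1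
    · exact (List.isChain_append.1 h.2.1).1
    · exact List.getLast?_eq_some_getLast _
    · exact (List.isChain_append.1 h.2.1).2.2 _ (List.getLast?_eq_some_getLast _) _ (by simp)

lemma exists_periodic_enum {m N : ℕ} (hm : 0 < m) (pos : Fin m → ℕ)
    (hinj : Function.Injective pos) (hlt : ∀ i, pos i < N) :
    ∃ (p : ℕ → ℕ) (σ : ℕ → Fin m), StrictMono p ∧ (∀ k, p (k + m) = p k + N) ∧
      (∀ k, p k % N = pos (σ k)) ∧ ∀ k k', k < k' → k' < k + m → σ k ≠ σ k' := by
  classical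
  set T := Finset.univ.image pos with hT
  have hTc : T.card = m := by rw [Finset.card_image_of_injective _ hinj]; simp
  set t := T.orderEmbOfFin hTc
  have htm : ∀ i, t i ∈ T := fun i => Finset.orderEmbOfFin_mem T hTc i
  have htN : ∀ i, t i < N := by
    intro i
    obtain ⟨j, -, hj⟩ := Finset.mem_image.1 (htm i)
    rw [← hj]; exact hlt j
  set p : ℕ → ℕ := fun k => t ⟨k % m, Nat.mod_lt _ hm⟩ + N * (k / m) with hp
  have hmono : StrictMono p := by
    apply strictMono_nat_of_lt_succ
    intro k
    simp only [hp]
    rcases Nat.lt_or_ge (k % m + 1) m with h | h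
    · have e1 : (k + 1) % m = k % m + 1 := by
        rw [Nat.add_mod, Nat.mod_eq_of_lt (a := 1) (by omega), Nat.mod_eq_of_lt h]
      have e2 : (k + 1) / m = k / m := by
        rw [Nat.succ_div]; split_ifs with hd
        · have := Nat.mod_eq_zero_of_dvd hd; omega
        · rfl
      rw [e2]
      have : t ⟨k % m, Nat.mod_lt _ hm⟩ < t ⟨(k + 1) % m, Nat.mod_lt _ hm⟩ := by
        apply t.strictMono; simp [Fin.lt_def, e1]
      omega
    · have h1 := Nat.mod_lt k hm
      have hd : m ∣ k + 1 := by
        apply Nat.dvd_of_mod_eq_zero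
        rw [← Nat.mod_add_mod, show k % m + 1 = m by omega, Nat.mod_self]
      have e2 : (k + 1) / m = k / m + 1 := by rw [Nat.succ_div, if_pos hd]
      rw [e2, Nat.mul_succ]
      have := htN ⟨k % m, Nat.mod_lt _ hm⟩
      omega
  have hper : ∀ k, p (k + m) = p k + N := by
    intro k
    simp only [hp, Nat.add_mod_right, Nat.add_div_right k hm, Nat.mul_succ]
    omega
  have hσ : ∀ k, ∃ i, p k % N = pos i := by
    intro k
    obtain ⟨j, -, hj⟩ := Finset.mem_image.1 (htm ⟨k % m, Nat.mod_lt _ hm⟩)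
    refine ⟨j, ?_⟩
    rw [hj]; simp only [hp]
    rw [Nat.add_mul_mod_self_left, Nat.mod_eq_of_lt (htN _)]
  choose σ hσ using hσ
  refine ⟨p, σ, hmono, hper, hσ, ?_⟩
  intro k k' hk hk' he
  have h1 := hmono hk
  have h2 := hmono hk'
  rw [hper] at h2
  have h3 : p k % N = p k' % N := by rw [hσ, hσ, he]
  have h4 := (Nat.modEq_iff_dvd' h1.le).1 h3
  have := Nat.le_of_dvd (by omega) h4
  omega

lemma sum_range_add_of_periodic {m : ℕ} (h : ℕ → ℕ) (hper : ∀ k, h (k + m) = h k) (j : ℕ) :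
    ∑ a ∈ Finset.range m, h (j + a) = ∑ a ∈ Finset.range m, h a := by
  induction j with
  | zero => simp
  | succ j ih =>
    rw [← ih]
    have h1 := Finset.sum_range_succ (fun a => h (j + a)) m
    have h2 := Finset.sum_range_succ' (fun a => h (j + a)) m
    rw [hper] at h1
    simp only [Nat.add_zero] at h2
    have h3 : ∀ a, j + 1 + a = j + (a + 1) := fun a => by omega
    simp only [h3]
    omega

lemma sum_card_filter_Ioc {p : ℕ → ℕ} (hp : Monotone p) (A : ℕ → Prop) [DecidablePred A]
    (s m : ℕ) : ∑ i ∈ Finset.range m, ((Finset.Ioc (p (s + i)) (p (s + i + 1))).filter A).card =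
      ((Finset.Ioc (p s) (p (s + m))).filter A).card := by
  induction m with
  | zero => simp
  | succ m ih =>
    rw [Finset.sum_range_succ, ih, ← Finset.card_union_of_disjoint, ← Finset.filter_union,
      Finset.Ioc_union_Ioc_eq_Ioc (hp (by omega)) (hp (by omega)), Nat.add_assoc]
    apply Finset.disjoint_filter_filter
    rw [Finset.disjoint_left]
    intro x hx hx'
    simp at hx hx'
    omega

open Classical in
/-- The neighbourhood of `v` as a finset. -/
noncomputable def nbrs [Fintype V] (G : SimpleGraph V) (v : V) : Finset V :=
  Finset.univ.filter (G.Adj v)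

@[simp] lemma mem_nbrs [Fintype V] {v w : V} : w ∈ nbrs G v ↔ G.Adj v w := by simp [nbrs]

end LongCycle

namespace LongCycle

variable {G : SimpleGraph V} {a b c d : V} {P Q : List V}

/-- The segment estimate: shifted neighbourhoods do not overlap inside an interval. -/
lemma sum_card_le_of_shift_disjoint (A : ℕ → ℕ → Prop) [∀ a, DecidablePred (A a)] {m u v : ℕ}
    (huv : u < v) (hm : 1 ≤ m)
    (hA : ∀ a b t, a < b → b ≤ m → u < t → t + (b - a) ≤ v → A a t → ¬ A b (t + (b - a)))
    (h0 : ¬ A m (u + 1)) :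
    ∑ a ∈ Finset.range (m + 1), ((Finset.Ioc u v).filter (A a)).card ≤ v - u + (m - 1) := by
  classical
  rw [← Finset.card_sigma]
  have : (Finset.Icc (u + 2) (v + m)).card = v - u + (m - 1) := by rw [Nat.card_Icc]; omega
  rw [← this]
  apply Finset.card_le_card_of_injOn (fun x => x.2 + m - x.1)
  · rintro ⟨a, t⟩ h
    simp only [Finset.coe_sigma, Set.mem_sigma_iff, Finset.coe_range, Set.mem_Iio, Finset.coe_filter,
      Finset.mem_Ioc, Set.mem_ofPred_eq] at h
    simp only [Finset.coe_Icc, Set.mem_Icc]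
    refine ⟨?_, by omega⟩
    by_contra hlt
    have h1 : a = m := by omega
    have h2 : t = u + 1 := by omega
    subst h1 h2
    exact h0 h.2.2
  · have key : ∀ a t b t', a < b → b ≤ m → u < t → t' ≤ v → A a t → A b t' →
        t + m - a = t' + m - b → False := by
      intro a t b t' hab hb ht ht' h1 h2 he
      obtain rfl : t' = t + (b - a) := by omega
      exact hA a b t hab hb ht ht' h1 h2
    rintro ⟨a, t⟩ h ⟨b, t'⟩ h' he
    simp only [Finset.coe_sigma, Set.mem_sigma_iff, Finset.coe_range, Set.mem_Iio, Finset.coe_filter,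
      Finset.mem_Ioc, Set.mem_ofPred_eq] at h h'
    simp only at he
    rcases lt_trichotomy a b with hab | rfl | hab
    · exact (key a t b t' hab (by omega) h.2.1.1 h'.2.1.2 h.2.2 h'.2.2 he).elim
    · have : t = t' := by omega
      rw [this]
    · exact (key b t' a t hab (by omega) h'.2.1.1 h.2.1.2 h'.2.2 h.2.2 he.symm).elim

open Classical in
/-- The vertices of the cycle. -/
noncomputable def cycleVerts (f : ℕ → V) (N : ℕ) : Finset V := (Finset.range N).image f

lemma MaxCycle.mem_cycleVerts {X : Set V} {N : ℕ} {f : ℕ → V} (h : MaxCycle G X N f) {x : V} :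
    x ∈ cycleVerts f N ↔ x ∈ Set.range f := by
  simp only [cycleVerts, Finset.mem_image, Finset.mem_range, Set.mem_range]
  constructor
  · rintro ⟨p, -, rfl⟩; exact ⟨p, rfl⟩
  · rintro ⟨p, rfl⟩; exact ⟨p % N, Nat.mod_lt _ h.pos, h.map_mod p⟩

lemma MaxCycle.card_cycleVerts {X : Set V} {N : ℕ} {f : ℕ → V} (h : MaxCycle G X N f) :
    (cycleVerts f N).card = N := by
  classical
  rw [cycleVerts, Finset.card_image_of_injOn, Finset.card_range]
  intro p hp q hq e
  exact h.inj p q (by simpa using hp) (by simpa using hq) e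

open Classical in
lemma MaxCycle.card_nbrs_inter_le [Fintype V] {X : Set V} {N : ℕ} {f : ℕ → V}
    (h : MaxCycle G X N f) (u : V) (s : ℕ) :
    (nbrs G u ∩ cycleVerts f N).card ≤
      ((Finset.Ioc s (s + N)).filter fun t => G.Adj u (f t)).card := by
  refine le_trans (Finset.card_le_card ?_) (Finset.card_image_le (f := f))
  intro x hx
  rw [Finset.mem_inter, mem_nbrs, h.mem_cycleVerts] at hx
  obtain ⟨hux, p, rfl⟩ := hx
  obtain ⟨q, hq1, hq2, hq3⟩ := h.exists_pos (s + 1) p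
  rw [Finset.mem_image]
  refine ⟨q, ?_, hq3⟩
  rw [Finset.mem_filter, Finset.mem_Ioc, hq3]
  exact ⟨⟨by omega, by omega⟩, hux⟩

/-- No set outside a longest cycle is both large and well linked in itself. -/
theorem not_wellLinked_off_cycle [Fintype V] {m δ N : ℕ} {f : ℕ → V} (hG : KConnected G m)
    (hm : 1 ≤ m) (hdeg : ∀ v, δ ≤ (nbrs G v).card)
    (hn : Fintype.card V + m * (m - 1) ≤ (m + 1) * δ)
    (hC : MaxCycle G Set.univ N f) (hN : m ≤ N) (B : Finset V)
    (hBC : ∀ x ∈ B, x ∉ Set.range f) (hB : m + 1 ≤ B.card)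
    (hlink : ∀ x ∈ B, ∀ y ∈ B, x ≠ y →
      ∃ P, PathList G x P y ∧ (∀ z ∈ P, z ∈ B) ∧ m ≤ P.length) : False := by
  classical
  obtain ⟨s, e, R, hR, hsB, heC, hRm, hRd⟩ := exists_linkage hG (A := B) (B := cycleVerts f N)
    (by omega) (by rw [hC.card_cycleVerts]; exact hN)
  have hse : ∀ i, s i ≠ e i := fun i h =>
    hBC _ (hsB i) (h ▸ hC.mem_cycleVerts.1 (heC i))
  choose L l hL hLp hLa using fun i => (hR i).exists_eq_cons_concat (hse i)
  -- the legs avoid the cycle, and `B` except for their starts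
  have hRn : ∀ i, e i ∉ s i :: L i := by
    intro i
    have := (hR i).1
    rw [hL, List.nodup_append'] at this
    exact fun h => this.2.2 h (by simp)
  have hLC : ∀ i, ∀ x ∈ s i :: L i, x ∉ Set.range f := by
    intro i x hx hxC
    have := (hRm i x (by rw [hL]; exact List.mem_append_left _ hx)).2 (hC.mem_cycleVerts.2 hxC)
    exact hRn i (this ▸ hx)
  have hLB : ∀ i, ∀ x ∈ L i, x ∉ B := by
    intro i x hx hxB
    have := (hRm i x (by rw [hL]; simp [hx])).1 hxB
    have h2 := (hLp i).1
    rw [List.nodup_cons] at h2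
    exact h2.1 (this ▸ hx)
  have hLd : ∀ i j, i ≠ j → ∀ x ∈ s i :: L i, x ∉ s j :: L j := by
    intro i j hij x hx hx'
    exact hRd i j hij x (by rw [hL]; exact List.mem_append_left _ hx)
      (by rw [hL]; exact List.mem_append_left _ hx')
  have hsinj : ∀ i j, i ≠ j → s i ≠ s j := by
    intro i j hij h
    exact hLd i j hij (s i) (by simp) (by simp [h])
  have heinj : ∀ i j, i ≠ j → e i ≠ e j := by
    intro i j hij h
    exact hRd i j hij (e i) (hR i).last_mem (h ▸ (hR j).last_mem)
  -- detours
  have hdet : ∀ i j, i ≠ j → ∃ P, PathList G (l i) P (l j) ∧ (∀ x ∈ P, x ∉ Set.range f) ∧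
      m ≤ P.length := by
    intro i j hij
    obtain ⟨M, hM, hMB, hMl⟩ := hlink _ (hsB i) _ (hsB j) (hsinj i j hij)
    refine ⟨_, (hLp i).detour hM (hLp j) (fun x hx hx' => hLB i x hx (hMB x hx'))
      (fun x hx hx' => hLB j x hx (hMB x hx'))
      (fun x hx hx' => hLd i j hij x (by simp [hx]) (by simp [hx'])), ?_, ?_⟩
    · intro x hx
      simp only [List.mem_append, List.mem_reverse] at hx
      rcases hx with (hx | hx) | hx
      · exact hLC i x (by simp [hx])
      · exact hBC x (hMB x hx)
      · exact hLC j x (by simp [hx])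
    · simp; omega
  obtain ⟨x₀, hx₀B, hx₀⟩ : ∃ x ∈ B, ∀ i, x ≠ s i := by
    by_contra! hall
    have h1 : B ⊆ Finset.univ.image s := by
      intro x hx
      obtain ⟨i, hi⟩ := hall x hx
      exact Finset.mem_image.2 ⟨i, Finset.mem_univ _, hi.symm⟩
    have h2 := (Finset.card_le_card h1).trans Finset.card_image_le
    simp at h2
    omega
  have hdet0 : ∀ i, ∃ P, PathList G (l i) P x₀ ∧ (∀ x ∈ P, x ∉ Set.range f) ∧
      m ≤ P.length := by
    intro i
    obtain ⟨M, hM, hMB, hMl⟩ := hlink _ (hsB i) _ hx₀B (hx₀ i).symm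
    refine ⟨_, (hLp i).detour hM (PathList.single x₀)
      (fun x hx hx' => hLB i x hx (hMB x hx')) (by simp) (by simp), ?_, ?_⟩
    · intro x hx
      simp only [List.mem_append, List.mem_reverse, List.not_mem_nil, or_false] at hx
      rcases hx with hx | hx
      · exact hLC i x (by simp [hx])
      · exact hBC x (hMB x hx)
    · simp; omega
  -- positions of the link ends
  choose pos hposN hpos using fun i => (by
    have := heC i
    simpa [cycleVerts] using this : ∃ p, p < N ∧ f p = e i)
  have hposinj : Function.Injective pos := by
    intro i j h
    by_contra hij
    exact heinj i j hij (by rw [← hpos, ← hpos, h])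
  obtain ⟨p, σ, hpm, hpp, hpσ, hσ⟩ := exists_periodic_enum hm pos hposinj hposN
  have hfp : ∀ k, f (p k) = e (σ k) := by
    intro k; rw [← hC.map_mod, hpσ, hpos]
  have hadj : ∀ k, G.Adj (f (p k)) (l (σ k)) := fun k => by rw [hfp]; exact (hLa _).symm
  set w : ℕ → V := fun k => f (p k + 1) with hw
  have hwp : ∀ k, w (k + m) = w k := by
    intro k; simp only [hw]; rw [hpp, show p k + N + 1 = p k + 1 + N by omega, hC.per]
  -- neighbours of `w k` off the cycle
  have hwK : ∀ k z, G.Adj (w k) z → z ∉ Set.range f → ¬ JoinedOff G (Set.range f) x₀ z := by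
    intro k z hz hzC hj
    obtain ⟨P, hP, hPC, -⟩ := hdet0 (σ k)
    have h1 : JoinedOff G (Set.range f) (l (σ k)) z :=
      (hP.joinedOff hPC hP.last_mem).trans hj
    obtain ⟨P', hP', hPC'⟩ := h1.exists_pathList (hPC _ hP.head_mem)
    have := hC.insert_le (p := p k) (k := 1) le_rfl hC.pos hP' (by simp) hPC' (hadj k) hz.symm
    have := hP'.length_pos
    omega
  have hww : ∀ k k' z, k < k' → k' < k + m → G.Adj (w k) z → G.Adj (w k') z →
      z ∉ Set.range f → False := by
    intro k k' z hk hk' h1 h2 hz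
    obtain ⟨P, hP, hPC, -⟩ := hdet _ _ (hσ k k' hk hk')
    have h3 := hpm hk
    have h4 := hpm hk'
    rw [hpp] at h4
    obtain ⟨g, hg⟩ := Nat.exists_eq_add_of_le h3.le
    refine hC.no_common_successor_nbr (o := p k) (g := g) (z := z) (by omega) (by omega) hP hPC
      (hadj k) (by rw [← hg]; exact (hadj k').symm) hz ?_ h1 (by rw [← hg]; exact h2)
    intro hzP
    obtain ⟨P0, hP0, hPC0, -⟩ := hdet0 (σ k)
    exact hwK k z h1 hz ((hP0.joinedOff hPC0 hP0.last_mem).symm.trans (hP.joinedOff hPC hzP))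
  -- segments
  have hseg : ∀ j, m ≤ j → j < m + m →
      ((Finset.Ioc (p j) (p (j + 1))).filter fun t => G.Adj x₀ (f t)).card +
      ∑ k ∈ Finset.range m, ((Finset.Ioc (p j) (p (j + 1))).filter fun t => G.Adj (w k) (f t)).card
      ≤ p (j + 1) - p j + (m - 1) := by
    intro j hj hj'
    have h1 := sum_card_le_of_shift_disjoint (m := m) (u := p j) (v := p (j + 1))
      (fun a t => G.Adj (if a = 0 then x₀ else w (j + a)) (f t)) (hpm (by omega)) hm ?_ ?_
    · rw [Finset.sum_range_succ'] at h1
      simp only [Nat.add_eq_zero_iff, one_ne_zero, and_false, if_false, if_true] at h1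
      have h2 := sum_range_add_of_periodic (m := m)
        (fun k => ((Finset.Ioc (p j) (p (j + 1))).filter fun t => G.Adj (w k) (f t)).card)
        (by intro k; simp only [hwp]) (j + 1)
      rw [← h2]
      have h3 : ∀ x, j + 1 + x = j + (x + 1) := fun x => by omega
      simp only [h3]
      omega
    · intro a b t hab hbm ht htb h1 h2
      rw [if_neg (by omega)] at h2
      obtain ⟨k', hk'⟩ : ∃ k', j + b = k' + m := ⟨j + b - m, by omega⟩
      have hk'1 : p k' ≤ p j := hpm.monotone (by omega)
      have hk'2 : p (j + 1) ≤ p k' + N := by rw [← hpp]; exact hpm.monotone (by omega)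
      rw [hk', hwp] at h2
      rcases Nat.eq_zero_or_pos a with rfl | ha
      · rw [if_pos rfl] at h1
        obtain ⟨P, hP, hPC, hPl⟩ := hdet0 (σ k')
        have := hC.crossing_le (o := p k') (t := t) (s := b - 0) (by omega) (by omega) (by omega)
          hP hPC (hadj k') h1 h2
        omega
      · rw [if_neg (by omega)] at h1
        obtain ⟨k, hk⟩ : ∃ k, j + a = k + m := ⟨j + a - m, by omega⟩
        rw [hk, hwp] at h1
        obtain ⟨P, hP, hPC, hPl⟩ := hdet _ _ (hσ k k' (by omega) (by omega))
        have hkk := hpm (show k < k' by omega)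
        have hk2 : p (j + 1) ≤ p k + N := by rw [← hpp]; exact hpm.monotone (by omega)
        obtain ⟨g, hg⟩ := Nat.exists_eq_add_of_le hkk.le
        have := hC.double_crossing_le (o := p k) (g := g) (t := t) (s := b - a) (by omega)
          (by omega) (by omega) (by omega) hP hPC (hadj k) (by rw [← hg]; exact (hadj k').symm)
          h1 (by rw [← hg]; exact h2)
        omega
    · rw [if_neg (by omega), hwp]
      exact G.loopless.irrefl _
  -- total count on the cycle
  have hcyc : (nbrs G x₀ ∩ cycleVerts f N).card +
      ∑ k ∈ Finset.range m, (nbrs G (w k) ∩ cycleVerts f N).card ≤ N + m * (m - 1) := by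
    have h1 := Finset.sum_le_sum (s := Finset.range m) fun i hi =>
      hseg (m + i) (by omega) (by rw [Finset.mem_range] at hi; omega)
    rw [Finset.sum_add_distrib, sum_card_filter_Ioc hpm.monotone, Finset.sum_comm] at h1
    simp only [sum_card_filter_Ioc hpm.monotone, hpp] at h1
    have h2 : ∑ i ∈ Finset.range m, (p (m + i + 1) - p (m + i) + (m - 1)) = N + m * (m - 1) := by
      rw [Finset.sum_add_distrib, Finset.sum_const, Finset.card_range, smul_eq_mul]
      congr 1
      have := Finset.sum_range_tsub (f := fun i => p (m + i))
        (fun a b hab => hpm.monotone (by simpa using hab)) m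
      simp only [Nat.add_zero, hpp] at this
      simpa [Nat.add_assoc] using this
    rw [h2] at h1
    refine le_trans (add_le_add (hC.card_nbrs_inter_le x₀ (p m)) (Finset.sum_le_sum fun k _ =>
      hC.card_nbrs_inter_le (w k) (p m))) h1
  -- total count off the cycle
  have hoff : 1 + (nbrs G x₀ \ cycleVerts f N).card +
      ∑ k ∈ Finset.range m, (nbrs G (w k) \ cycleVerts f N).card + N ≤ Fintype.card V := by
    have hx₀C := hBC _ hx₀B
    have hJ0 : ∀ z, z ∈ nbrs G x₀ \ cycleVerts f N → JoinedOff G (Set.range f) x₀ z := by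
      intro z hz
      rw [Finset.mem_sdiff, mem_nbrs, hC.mem_cycleVerts] at hz
      exact Relation.ReflTransGen.single ⟨hz.1, hx₀C, hz.2⟩
    rw [← Finset.card_biUnion]
    · have h1 : Disjoint {x₀} (nbrs G x₀ \ cycleVerts f N) := by
        simp
      have h2 : Disjoint ({x₀} ∪ (nbrs G x₀ \ cycleVerts f N))
          ((Finset.range m).biUnion fun k => nbrs G (w k) \ cycleVerts f N) := by
        rw [Finset.disjoint_left]
        intro z hz hz'
        rw [Finset.mem_biUnion] at hz'
        obtain ⟨k, -, hz'⟩ := hz'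
        rw [Finset.mem_sdiff, mem_nbrs, hC.mem_cycleVerts] at hz'
        refine hwK k z hz'.1 hz'.2 ?_
        rcases Finset.mem_union.1 hz with hz | hz
        · rw [Finset.mem_singleton.1 hz]; exact Relation.ReflTransGen.refl
        · exact hJ0 z hz
      rw [← Finset.card_singleton x₀, ← Finset.card_union_of_disjoint h1,
        ← Finset.card_union_of_disjoint h2]
      refine le_trans (le_of_eq (congrArg (_ + ·) hC.card_cycleVerts.symm)) ?_
      rw [← Finset.card_union_of_disjoint]
      · exact Finset.card_le_univ _
      · rw [Finset.disjoint_left]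
        intro z hz hz'
        simp only [Finset.mem_union, Finset.mem_singleton, Finset.mem_biUnion,
          Finset.mem_sdiff] at hz
        rcases hz with (rfl | hz) | ⟨k, -, hz⟩
        · exact hx₀C (hC.mem_cycleVerts.1 hz')
        · exact hz.2 hz'
        · exact hz.2 hz'
    · intro k hk k' hk' hkk
      simp only [Finset.coe_range, Set.mem_Iio] at hk hk'
      simp only [Function.onFun]
      rw [Finset.disjoint_left]
      intro z hz hz'
      rw [Finset.mem_sdiff, mem_nbrs, hC.mem_cycleVerts] at hz hz'
      rcases lt_or_gt_of_ne hkk with h | h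
      · exact hww k k' z h (by omega) hz.1 hz'.1 hz.2
      · exact hww k' k z h (by omega) hz'.1 hz.1 hz.2
  have hsplit : ∀ v, (nbrs G v).card =
      (nbrs G v ∩ cycleVerts f N).card + (nbrs G v \ cycleVerts f N).card :=
    fun v => (Finset.card_inter_add_card_sdiff _ _).symm
  have hδ : m * δ ≤ ∑ k ∈ Finset.range m, (nbrs G (w k) ∩ cycleVerts f N).card +
      ∑ k ∈ Finset.range m, (nbrs G (w k) \ cycleVerts f N).card := by
    rw [← Finset.sum_add_distrib]
    calc m * δ = ∑ _k ∈ Finset.range m, δ := by simp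
      _ ≤ _ := Finset.sum_le_sum fun k _ => by rw [← hsplit]; exact hdeg _
  have hδ0 := hdeg x₀
  rw [hsplit] at hδ0
  rw [Nat.add_mul, Nat.one_mul] at hn
  omega

end LongCycle

namespace LongCycle

variable {G : SimpleGraph V} {a b c d : V} {P Q : List V}

/-- Two disjoint paths whose inner ends have large degree can be merged into one path with the
same outer ends. -/
lemma PathList.merge [DecidableEq V] {A B : List V} {x y : V} (hA : PathList G a A x)
    (hB : PathList G y B b) (hd : ∀ v ∈ A, v ∉ B) (S T : Finset V)
    (hS : ∀ v ∈ S, G.Adj x v ∧ v ∈ A ++ B) (hT : ∀ v ∈ T, G.Adj y v ∧ v ∈ A ++ B)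
    (hcard : A.length + B.length + 1 ≤ S.card + T.card) :
    ∃ R, R.Perm (A ++ B) ∧ PathList G a R b := by
  classical
  set W := A ++ B with hW
  set w := W.length with hw
  have hwl : w = A.length + B.length := by simp [hw, hW]
  have hA1 := hA.length_pos
  have hB1 := hB.length_pos
  have hx : W[A.length - 1]? = some x := by
    rw [hW, List.getElem?_append_left (by omega)]
    rw [← List.getLast?_eq_getElem?]; exact hA.2.2.2
  have hy : W[A.length]? = some y := by
    rw [hW, List.getElem?_append_right le_rfl, Nat.sub_self, ← List.head?_eq_getElem?]
    exact hB.2.2.1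
  set T1 := (Finset.range w).filter fun t => ∃ v, W[t]? = some v ∧ v ∈ S
  set T2 := (Finset.range w).filter fun t => ∃ v, W[t + 1]? = some v ∧ v ∈ T
  have h1 : S.card ≤ T1.card := by
    apply Finset.card_le_card_of_surjOn (fun t => W.getD t x)
    intro v hv
    obtain ⟨t, ht, rfl⟩ := List.getElem_of_mem (hS v hv).2
    refine ⟨t, ?_, by simp [ht]⟩
    simp only [T1, Finset.coe_filter, Finset.mem_range, Set.mem_ofPred_eq]
    exact ⟨ht, _, List.getElem?_eq_getElem ht, hv⟩
  have h2 : T.card ≤ T2.card + 1 := by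
    have : T ⊆ insert a (T2.image (fun t => W.getD (t + 1) x)) := by
      intro v hv
      obtain ⟨t, ht, rfl⟩ := List.getElem_of_mem (hT v hv).2
      rcases Nat.eq_zero_or_pos t with rfl | h0
      · rw [Finset.mem_insert]; left
        have h3 := hA.2.2.1
        rw [List.head?_eq_getElem?] at h3
        have h4 : W[0]? = some a := by rw [hW, List.getElem?_append_left (by omega)]; exact h3
        rw [List.getElem?_eq_getElem ht] at h4
        simpa using h4
      · rw [Finset.mem_insert]; right
        rw [Finset.mem_image]
        refine ⟨t - 1, ?_, ?_⟩
        · simp only [T2, Finset.mem_filter, Finset.mem_range]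
          refine ⟨by omega, _, ?_, hv⟩
          rw [Nat.sub_add_cancel h0]; exact List.getElem?_eq_getElem ht
        · rw [Nat.sub_add_cancel h0]; simp [ht]
    exact (Finset.card_le_card this).trans ((Finset.card_insert_le _ _).trans
      (Nat.add_le_add_right Finset.card_image_le 1))
  have h3 : ∃ t, t ∈ T1 ∧ t ∈ T2 := by
    by_contra! hno
    have hdis : Disjoint T1 T2 := Finset.disjoint_left.2 hno
    have hsub : T1 ∪ T2 ⊆ (Finset.range w).erase (A.length - 1) := by
      intro t ht
      rw [Finset.mem_erase, Finset.mem_range]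
      simp only [T1, T2, Finset.mem_union, Finset.mem_filter, Finset.mem_range] at ht
      rcases ht with ⟨ht, v, hv, hvS⟩ | ⟨ht, v, hv, hvT⟩
      · refine ⟨?_, ht⟩
        rintro rfl
        rw [hx] at hv
        obtain rfl : x = v := by simpa using hv
        exact (hS x hvS).1.ne rfl
      · refine ⟨?_, ht⟩
        rintro rfl
        rw [Nat.sub_add_cancel hA1, hy] at hv
        obtain rfl : y = v := by simpa using hv
        exact (hT y hvT).1.ne rfl
    have := Finset.card_le_card hsub
    rw [Finset.card_union_of_disjoint hdis, Finset.card_erase_of_mem (by simp; omega),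
      Finset.card_range] at this
    omega
  obtain ⟨t, ht1, ht2⟩ := h3
  simp only [T1, T2, Finset.mem_filter, Finset.mem_range] at ht1 ht2
  obtain ⟨-, v, hv, hvS⟩ := ht1
  obtain ⟨-, u, hu, huT⟩ := ht2
  have hxv := (hS v hvS).1
  have hyu := (hT u huT).1
  have htm : t ≠ A.length - 1 := by
    rintro rfl
    rw [hx] at hv
    obtain rfl : x = v := by simpa using hv
    exact hxv.ne rfl
  -- the two-step decomposition at positions `t`, `t + 1`
  have split : ∀ (L : List V) (t : ℕ), L[t]? = some v → L[t + 1]? = some u →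
      L = (L.take t ++ [v]) ++ u :: L.drop (t + 2) := by
    intro L t h1 h2
    obtain ⟨h1', rfl⟩ := List.getElem?_eq_some_iff.1 h1
    obtain ⟨h2', rfl⟩ := List.getElem?_eq_some_iff.1 h2
    rw [List.append_assoc, List.singleton_append, List.getElem_cons_drop, List.getElem_cons_drop,
      List.take_append_drop]
  rcases Nat.lt_or_ge t (A.length - 1) with hlt | hge
  · rw [hW, List.getElem?_append_left (by omega)] at hv hu
    have hAs := split A t hv hu
    generalize A.take t = A1 at hAs
    generalize A.drop (t + 2) = A2 at hAs
    subst hAs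
    have p2 := hA.split_right
    have hA' := hA
    rw [List.append_assoc, List.singleton_append] at hA'
    have p1 := hA'.split_left
    have hnd := hA.1
    rw [List.nodup_append'] at hnd
    have p3 := p1.append p2.reverse hxv.symm (by
      intro z hz hz'
      exact hnd.2.2 hz (List.mem_reverse.1 hz'))
    have p4 := p3.append hB hyu.symm (by
      intro z hz
      apply hd
      simp at hz ⊢; tauto)
    refine ⟨_, ?_, p4⟩
    exact List.Perm.append_right _ (List.Perm.append_left _ (List.reverse_perm _))
  · rw [hW, List.getElem?_append_right (by omega)] at hv hu
    rw [show t + 1 - A.length = t - A.length + 1 by omega] at hu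
    have hBs := split B _ hv hu
    generalize B.take _ = B1 at hBs
    generalize B.drop _ = B2 at hBs
    subst hBs
    have p2 := hB.split_right
    have hB' := hB
    rw [List.append_assoc, List.singleton_append] at hB'
    have p1 := hB'.split_left
    have hnd := hB.1
    rw [List.nodup_append'] at hnd
    have p3 := hA.append p1.reverse hxv (by
      intro z hz hz'
      exact hd z hz (List.mem_append_left _ (List.mem_reverse.1 hz')))
    have p4 := p3.append p2 hyu (by
      intro z hz hz'
      rcases List.mem_append.1 hz with hz | hz
      · exact hd z hz (List.mem_append_right _ hz')
      · exact hnd.2.2 (List.mem_reverse.1 hz) hz')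
    refine ⟨_, ?_, p4⟩
    rw [hW, List.append_assoc]
    exact List.Perm.append_left _ (List.Perm.append_right _ (List.reverse_perm _))

set_option maxHeartbeats 1000000 in
/-- Suppose that the end of every rearrangement of a path from `u` has at least `μ` neighbours in
`D`, all on the path, and that a cycle in `X` longer than `μ` has at most `2 * μ - 2` vertices.
Then the path contains a well linked set. -/
lemma exists_wellLinked_of_dense [DecidableEq V] {X : Set V} {μ : ℕ} {u : V} {ρ₀ : List V} {e₀ : V}
    (hρ₀ : PathList G u ρ₀ e₀) (hX : ∀ x ∈ ρ₀, x ∈ X) (D : V → Finset V)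
    (hD : ∀ v, ∀ w ∈ D v, G.Adj v w)
    (hend : ∀ ρ e, PathList G u ρ e → ρ.Perm ρ₀ → μ ≤ (D e).card ∧ ∀ w ∈ D e, w ∈ ρ₀)
    (hμ : 1 ≤ μ)
    (hcyc : ∀ L, GenCycle G L → (∀ x ∈ L, x ∈ X) → μ + 1 ≤ L.length → L.length + 2 ≤ 2 * μ) :
    ∃ R : Finset V, (∀ x ∈ R, x ∈ ρ₀) ∧ μ + 1 ≤ R.card ∧
      ∀ x ∈ R, ∀ y ∈ R, x ≠ y → ∃ P, PathList G x P y ∧ (∀ z ∈ P, z ∈ R) ∧ μ ≤ P.length := by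
  classical
  -- choose the longest closing arc
  set Good : ℕ → Prop := fun k => ∃ B z A e, PathList G u (B ++ z :: A) e ∧
    (B ++ z :: A).Perm ρ₀ ∧ z ∈ D e ∧ A.length = k with hGood
  have hne : ∃ k, Good k := by
    obtain ⟨h1, h2⟩ := hend ρ₀ e₀ hρ₀ (List.Perm.refl _)
    obtain ⟨z, hz⟩ := Finset.card_pos.1 (by omega : 0 < (D e₀).card)
    obtain ⟨B, A, hBA⟩ := List.append_of_mem (h2 z hz)
    exact ⟨A.length, B, z, A, e₀, hBA ▸ hρ₀, hBA ▸ List.Perm.refl _, hz, rfl⟩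
  have hbd : ∀ k, Good k → k ≤ ρ₀.length := by
    rintro k ⟨B, z, A, e, -, hp, -, rfl⟩
    rw [← hp.length_eq]; simp; omega
  obtain ⟨k, ⟨B, z, A, e, hρ, hperm, hze, hk⟩, hmax⟩ : ∃ k, Good k ∧ ∀ k', Good k' → k' ≤ k := by
    refine ⟨Nat.findGreatest Good ρ₀.length, ?_, fun k' hk' => Nat.le_findGreatest (hbd k' hk') hk'⟩
    obtain ⟨k, hk⟩ := hne
    exact Nat.findGreatest_spec (hbd k hk) hk
  have hzA := hρ.split_right
  have hzn : z ∉ A := (List.nodup_cons.1 hzA.1).1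
  have hAne : A ≠ [] := by
    rintro rfl
    have : z = e := by simpa using hzA.2.2.2
    subst this
    exact (hD _ _ hze).ne rfl
  -- degrees of the ends of rearrangements of `A`
  have hE : ∀ A' e', A'.Perm A → PathList G z (z :: A') e' →
      μ ≤ (D e').card ∧ ∀ w ∈ D e', w ∈ z :: A := by
    intro A' e' hpA hA'
    have hBz : ∀ v ∈ B ++ [z], v ∉ A' := by
      intro v hv hv'
      have := hρ.1
      rw [show B ++ z :: A = (B ++ [z]) ++ A by simp, List.nodup_append'] at this
      exact this.2.2 hv (hpA.mem_iff.1 hv')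
    have h1 := hρ.split_left.join hA' hBz
    have h2 : (B ++ [z] ++ A').Perm ρ₀ := by
      refine List.Perm.trans ?_ hperm
      rw [List.append_assoc, List.singleton_append]
      exact List.Perm.append_left _ (List.Perm.cons _ hpA)
    obtain ⟨h3, h4⟩ := hend _ _ h1 h2
    refine ⟨h3, fun w hw => ?_⟩
    have hw' := h2.mem_iff.2 (h4 w hw)
    rw [List.append_assoc, List.singleton_append, List.mem_append] at hw'
    rcases hw' with hwB | hw'
    · exfalso
      obtain ⟨B1, B2, rfl⟩ := List.append_of_mem hwB
      have := hmax (B2 ++ z :: A').length ⟨B1, w, B2 ++ z :: A', e', by simpa using h1,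
        by simpa using h2, hw, rfl⟩
      have hl := hpA.length_eq
      simp at this
      omega
    · rw [List.mem_cons] at hw' ⊢
      exact hw'.imp_right hpA.mem_iff.1
  have hsub : ∀ x ∈ z :: A, x ∈ ρ₀ := fun x hx =>
    hperm.mem_iff.1 (List.mem_append_right _ hx)
  have hr1 : μ + 1 ≤ (z :: A).length := by
    obtain ⟨h1, h2⟩ := hE A e (List.Perm.refl _) hzA
    have h3 : insert e (D e) ⊆ (z :: A).toFinset := by
      intro v hv
      rw [List.mem_toFinset]
      rcases Finset.mem_insert.1 hv with rfl | hv
      · exact hzA.last_mem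
      · exact h2 v hv
    have h4 := Finset.card_le_card h3
    rw [Finset.card_insert_of_notMem (fun h => (hD _ _ h).ne rfl)] at h4
    exact (Nat.add_le_add_right h1 1).trans (h4.trans (List.toFinset_card_le _))
  have hr2 : (z :: A).length + 2 ≤ 2 * μ :=
    hcyc _ ⟨z, e, hzA, fun _ => hD _ _ hze⟩ (fun x hx => hX x (hsub x hx)) hr1
  -- the path on `A` alone
  obtain ⟨q₁, A₀, rfl⟩ := List.exists_cons_of_ne_nil hAne
  have hA : PathList G q₁ (q₁ :: A₀) e := PathList.split_right (P := [z]) hzA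
  have hzq : G.Adj z q₁ := PathList.adj_of_append_cons (P := []) hzA
  have hez : G.Adj e z := hD _ _ hze
  have hq₁ : ∃ A', A'.Perm (q₁ :: A₀) ∧ PathList G z (z :: A') q₁ :=
    ⟨_, List.reverse_perm _, hA.reverse.cons hez.symm (by rw [List.mem_reverse]; exact hzn)⟩
  have hall : ∀ A2 A1 q, q₁ :: A₀ = A1 ++ q :: A2 →
      ∃ A', A'.Perm (q₁ :: A₀) ∧ PathList G z (z :: A') q := by
    intro A2
    induction A2 with
    | nil =>
      intro A1 q h
      have : q = e := by
        have h1 := hA.2.2.2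
        rw [h, List.getLast?_append] at h1
        simpa using h1
      subst this
      exact ⟨_, List.Perm.refl _, hzA⟩
    | cons q' A2 ih =>
      intro A1 q h
      obtain ⟨Aq, hAq1, hAq2⟩ := ih (A1 ++ [q]) q' (by simp [h])
      obtain ⟨dq, dq'⟩ := hE _ _ hAq1 hAq2
      obtain ⟨Aq₁, hAq₁1, hAq₁2⟩ := hq₁
      obtain ⟨d1, d1'⟩ := hE _ _ hAq₁1 hAq₁2
      have h' : q₁ :: A₀ = (A1 ++ [q]) ++ q' :: A2 := by simp [h]
      have hA3 := hA
      rw [h'] at hA3 hzn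
      have p1 := hA3.split_right.reverse.cons (c := z) hez.symm (by
        intro hz; exact hzn (List.mem_append_right _ (List.mem_reverse.1 hz)))
      have p2 : PathList G q₁ (A1 ++ [q]) q := by
        have := hA
        rw [h] at this
        exact this.split_left
      have hnd := hA3.1
      rw [List.nodup_append'] at hnd
      have hmem : ∀ v, v ∈ z :: q₁ :: A₀ → v ∈ (z :: (q' :: A2).reverse) ++ (A1 ++ [q]) := by
        intro v hv
        rw [h'] at hv
        simp at hv ⊢; tauto
      have hlen : (q₁ :: A₀).length = (A1 ++ [q]).length + (q' :: A2).length := by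
        rw [h']; exact List.length_append
      obtain ⟨R, hR1, hR2⟩ := p1.merge p2 (by
        intro v hv hv'
        rcases List.mem_cons.1 hv with rfl | hv
        · exact hzn (List.mem_append_left _ hv')
        · exact hnd.2.2 hv' (List.mem_reverse.1 hv)) (D q') (D q₁)
        (fun v hv => ⟨hD _ _ hv, hmem v (dq' v hv)⟩) (fun v hv => ⟨hD _ _ hv, hmem v (d1' v hv)⟩)
        (by
          have e1 : (z :: q₁ :: A₀).length = (q₁ :: A₀).length + 1 := rfl
          have e2 : (z :: (q' :: A2).reverse).length = (q' :: A2).length + 1 := by simp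
          omega)
      obtain ⟨z', R', rfl⟩ := List.exists_cons_of_ne_nil hR2.ne_nil
      obtain rfl : z' = z := by simpa using hR2.2.2.1
      refine ⟨R', ?_, hR2⟩
      rw [List.cons_append] at hR1
      refine ((List.perm_cons _).1 hR1).trans ?_
      rw [h']
      exact (List.Perm.append_right _ (List.reverse_perm _)).trans List.perm_append_comm
  have hallm : ∀ q ∈ q₁ :: A₀, ∃ A', A'.Perm (q₁ :: A₀) ∧ PathList G z (z :: A') q := by
    intro q hq
    obtain ⟨A1, A2, h⟩ := List.append_of_mem hq
    exact hall A2 A1 q h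
  have hdeg : ∀ q ∈ q₁ :: A₀, μ ≤ (D q).card ∧ ∀ w ∈ D q, w ∈ z :: q₁ :: A₀ := by
    intro q hq
    obtain ⟨A', h1, h2⟩ := hallm q hq
    exact hE A' q h1 h2
  -- links between two vertices of `A`
  have hlink : ∀ A1 x A2 y A3, q₁ :: A₀ = A1 ++ x :: A2 ++ y :: A3 →
      ∃ P, PathList G x P y ∧ (∀ v ∈ P, v ∈ z :: q₁ :: A₀) ∧ μ ≤ P.length := by
    intro A1 x A2 y A3 h
    have hlen : (q₁ :: A₀).length = A1.length + A2.length + A3.length + 2 := by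
      rw [h]; simp; omega
    have e1 : (z :: q₁ :: A₀).length = (q₁ :: A₀).length + 1 := rfl
    have hmem : ∀ v, v ∈ q₁ :: A₀ ↔ v ∈ A1 ∨ v = x ∨ v ∈ A2 ∨ v = y ∨ v ∈ A3 := by
      intro v; rw [h]; simp
    have hA' := hA
    rw [h] at hA'
    have pL : PathList G q₁ (A1 ++ [x]) x := by
      rw [List.append_assoc, List.cons_append] at hA'; exact hA'.split_left
    have hxp : ∃ x', PathList G x' (A2 ++ [y]) y := by
      have h1 := hA'.split_left
      rw [List.append_assoc, List.cons_append] at h1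
      have h2 := h1.split_right
      have : A2 ++ [y] ≠ [] := by simp
      obtain ⟨x', A2', hx'⟩ := List.exists_cons_of_ne_nil this
      rw [hx'] at h2 ⊢
      exact ⟨x', PathList.split_right (P := [x]) h2⟩
    obtain ⟨x', pM⟩ := hxp
    have hx'm : x' ∈ q₁ :: A₀ := by
      have := pM.head_mem
      rw [hmem]; simp at this; tauto
    obtain ⟨dx, dx'⟩ := hdeg x' hx'm
    have hnd := hA'.1
    have hdLM : ∀ v ∈ (A1 ++ [x]).reverse, v ∉ A2 ++ [y] := by
      intro v hv hv'
      rw [show A1 ++ x :: A2 ++ y :: A3 = ((A1 ++ [x]) ++ (A2 ++ [y])) ++ A3 by simp,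
        List.nodup_append', List.nodup_append'] at hnd
      exact hnd.1.2.2 (List.mem_reverse.1 hv) hv'
    rcases A3 with _ | ⟨y', A3⟩
    · -- the successor of `y` is `z`
      obtain ⟨d1, d1'⟩ := hdeg q₁ (by simp)
      have hm : ∀ v q, v ∈ (D q).erase z → (∀ w ∈ D q, w ∈ z :: q₁ :: A₀) →
          G.Adj q v ∧ v ∈ (A1 ++ [x]).reverse ++ (A2 ++ [y]) := by
        intro v q hv hq
        rw [Finset.mem_erase] at hv
        refine ⟨hD _ _ hv.2, ?_⟩
        have := (List.mem_cons.1 (hq v hv.2)).resolve_left hv.1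
        rw [hmem] at this
        simp at this ⊢; tauto
      obtain ⟨R, hR1, hR2⟩ := pL.reverse.merge pM hdLM ((D q₁).erase z) ((D x').erase z)
        (fun v hv => hm v q₁ hv d1') (fun v hv => hm v x' hv dx') (by
          have g1 := Finset.pred_card_le_card_erase (a := z) (s := D q₁)
          have g2 := Finset.pred_card_le_card_erase (a := z) (s := D x')
          simp at hlen ⊢
          simp at e1 hr2
          omega)
      refine ⟨R, hR2, ?_, ?_⟩
      · intro v hv
        have := hR1.mem_iff.1 hv
        rw [List.mem_cons, hmem]
        simp at this ⊢; tauto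
      · rw [hR1.length_eq]; simp at hlen hr1 ⊢; omega
    · have pR := hA'
      rw [show A1 ++ x :: A2 ++ y :: y' :: A3 = (A1 ++ x :: A2 ++ [y]) ++ y' :: A3 by simp] at pR hnd
      have pR := pR.split_right
      obtain ⟨dy, dy'⟩ := hdeg y' (by rw [hmem]; simp)
      have hzR : z ∉ (y' :: A3).reverse := by
        intro hz
        exact hzn ((hmem z).2 (by simp at hz ⊢; tauto))
      have hzL : z ∉ (A1 ++ [x]).reverse := by
        intro hz
        exact hzn ((hmem z).2 (by simp at hz ⊢; tauto))
      rw [List.nodup_append'] at hnd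
      have p1 := pL.reverse.append (pR.reverse.cons hez.symm hzR) hzq.symm (by
        intro v hv hv'
        rcases List.mem_cons.1 hv' with rfl | hv'
        · exact hzL hv
        · refine hnd.2.2 ?_ (List.mem_reverse.1 hv')
          simp at hv ⊢; tauto)
      have hm : ∀ v ∈ z :: q₁ :: A₀,
          v ∈ ((A1 ++ [x]).reverse ++ z :: (y' :: A3).reverse) ++ (A2 ++ [y]) := by
        intro v hv
        rw [List.mem_cons, hmem] at hv
        simp at hv ⊢; tauto
      obtain ⟨R, hR1, hR2⟩ := p1.merge pM (by
        intro v hv hv'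
        rcases List.mem_append.1 hv with hv | hv
        · exact hdLM v hv hv'
        · rcases List.mem_cons.1 hv with rfl | hv
          · exact hzn ((hmem v).2 (by simp at hv' ⊢; tauto))
          · refine hnd.2.2 ?_ (List.mem_reverse.1 hv)
            simp at hv' ⊢; tauto) (D y') (D x')
        (fun v hv => ⟨hD _ _ hv, hm v (dy' v hv)⟩) (fun v hv => ⟨hD _ _ hv, hm v (dx' v hv)⟩) (by
          simp at hlen hr2 ⊢
          omega)
      refine ⟨R, hR2, ?_, ?_⟩
      · intro v hv
        have := hR1.mem_iff.1 hv
        rw [List.mem_cons, hmem]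
        simp at this ⊢; tauto
      · rw [hR1.length_eq]; simp at hlen hr1 ⊢; omega
  have hfromz : ∀ q ∈ q₁ :: A₀,
      ∃ P, PathList G z P q ∧ (∀ v ∈ P, v ∈ z :: q₁ :: A₀) ∧ μ ≤ P.length := by
    intro q hq
    obtain ⟨A', h1, h2⟩ := hallm q hq
    refine ⟨_, h2, ?_, ?_⟩
    · intro v hv
      rw [List.mem_cons] at hv ⊢
      exact hv.imp_right h1.mem_iff.1
    · have := h1.length_eq
      simp at this hr1 ⊢; omega
  have hrev : ∀ x y, (∃ P, PathList G x P y ∧ (∀ v ∈ P, v ∈ z :: q₁ :: A₀) ∧ μ ≤ P.length) →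
      ∃ P, PathList G y P x ∧ (∀ v ∈ P, v ∈ z :: q₁ :: A₀) ∧ μ ≤ P.length := by
    rintro x y ⟨P, h1, h2, h3⟩
    exact ⟨P.reverse, h1.reverse, fun v hv => h2 v (List.mem_reverse.1 hv), by simpa using h3⟩
  refine ⟨(z :: q₁ :: A₀).toFinset, fun x hx => hsub x (List.mem_toFinset.1 hx), ?_, ?_⟩
  · rw [List.toFinset_card_of_nodup hzA.1]; exact hr1
  · intro x hx y hy hxy
    simp only [List.mem_toFinset] at hx hy ⊢
    rcases List.mem_cons.1 hx with rfl | hx'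
    · exact hfromz y ((List.mem_cons.1 hy).resolve_left hxy.symm)
    rcases List.mem_cons.1 hy with rfl | hy'
    · exact hrev _ _ (hfromz x hx')
    obtain ⟨A1, A2, h⟩ := List.append_of_mem hx'
    rw [h, List.mem_append, List.mem_cons] at hy'
    rcases hy' with hy' | hy' | hy'
    · obtain ⟨B1, B2, rfl⟩ := List.append_of_mem hy'
      exact hrev _ _ (hlink B1 y B2 x A2 h)
    · exact absurd hy'.symm hxy
    · obtain ⟨B1, B2, rfl⟩ := List.append_of_mem hy'
      exact hlink A1 x B1 y B2 (by simpa using h)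

end LongCycle

namespace LongCycle

variable {G : SimpleGraph V} {a b : V} {P Q : List V}

/-- Disjoint paths `u i :: L i` hanging off the cyclic sequence `u` of length `c` inside `X`. -/
structure Hanging (G : SimpleGraph V) (X : Set V) (c : ℕ) (u : ℕ → V) (L : ℕ → List V) : Prop where
  chain : ∀ i < c, (u i :: L i).IsChain G.Adj
  nodup : ∀ i < c, (L i).Nodup
  mem : ∀ i < c, ∀ x ∈ L i, x ∈ X
  off : ∀ i < c, ∀ x ∈ L i, x ∉ Set.range u
  disj : ∀ i < c, ∀ j < c, i ≠ j → ∀ x ∈ L i, x ∉ L j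

/-- The end of the `i`-th hanging path. -/
def tip (u : ℕ → V) (L : ℕ → List V) (i : ℕ) : V := (u i :: L i).getLast (List.cons_ne_nil _ _)

/-- The weight of a system of hanging paths. -/
def hangWeight (c : ℕ) (L : ℕ → List V) : ℕ :=
  ∑ i ∈ Finset.range c, ((L i).length + min 1 (L i).length)

open Classical in
/-- The neighbours of `v` in `X`. -/
noncomputable def nbrsIn [Fintype V] (G : SimpleGraph V) (X : Set V) (v : V) : Finset V :=
  Finset.univ.filter fun w => G.Adj v w ∧ w ∈ X

@[simp] lemma mem_nbrsIn [Fintype V] {X : Set V} {v w : V} :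
    w ∈ nbrsIn G X v ↔ G.Adj v w ∧ w ∈ X := by simp [nbrsIn]

lemma tip_eq_of_nil {u : ℕ → V} {L : ℕ → List V} {i : ℕ} (h : L i = []) : tip u L i = u i := by
  simp [tip, h]

lemma sum_range_eq_of_update {c i : ℕ} (hi : i < c) (F F' : ℕ → ℕ)
    (h : ∀ k, k ≠ i → F' k = F k) :
    ∑ k ∈ Finset.range c, F' k + F i = ∑ k ∈ Finset.range c, F k + F' i := by
  have h1 := Finset.sum_erase_add (Finset.range c) F' (Finset.mem_range.2 hi)
  have h2 := Finset.sum_erase_add (Finset.range c) F (Finset.mem_range.2 hi)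
  have h3 : ∑ k ∈ (Finset.range c).erase i, F' k = ∑ k ∈ (Finset.range c).erase i, F k :=
    Finset.sum_congr rfl fun k hk => h k (Finset.ne_of_mem_erase hk)
  omega

namespace Hanging

variable {X : Set V} {c : ℕ} {u : ℕ → V} {L : ℕ → List V}

lemma pathList (h : Hanging G X c u L) {i : ℕ} (hi : i < c) :
    PathList G (u i) (u i :: L i) (tip u L i) :=
  ⟨List.nodup_cons.2 ⟨fun hu => h.off i hi _ hu ⟨i, rfl⟩, h.nodup i hi⟩, h.chain i hi, by simp,
    List.getLast?_eq_some_getLast _⟩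

lemma tip_eq (h : Hanging G X c u L) {i : ℕ} (hi : i < c) {e : V}
    (he : PathList G (u i) (u i :: L i) e) : tip u L i = e := by
  have := (h.pathList hi).2.2.2
  rw [he.2.2.2] at this
  simpa using this.symm

lemma tip_mem_of_ne_nil {i : ℕ} (h : L i ≠ []) : tip u L i ∈ L i := by
  rw [tip, List.getLast_cons h]; exact List.getLast_mem h

/-- Replace one hanging path. -/
lemma update (h : Hanging G X c u L) {i : ℕ} (hi : i < c) {L' : List V} {e : V}
    (hL : PathList G (u i) (u i :: L') e) (hX : ∀ x ∈ L', x ∈ X)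
    (hoff : ∀ x ∈ L', x ∉ Set.range u) (hd : ∀ j < c, j ≠ i → ∀ x ∈ L', x ∉ L j) :
    Hanging G X c u (Function.update L i L') := by
  constructor
  · intro k hk
    by_cases hki : k = i
    · subst hki; rw [Function.update_self]; exact hL.2.1
    · rw [Function.update_of_ne hki]; exact h.chain k hk
  · intro k hk
    by_cases hki : k = i
    · subst hki; rw [Function.update_self]; exact (List.nodup_cons.1 hL.1).2
    · rw [Function.update_of_ne hki]; exact h.nodup k hk
  · intro k hk
    by_cases hki : k = i
    · subst hki; rw [Function.update_self]; exact hX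
    · rw [Function.update_of_ne hki]; exact h.mem k hk
  · intro k hk
    by_cases hki : k = i
    · subst hki; rw [Function.update_self]; exact hoff
    · rw [Function.update_of_ne hki]; exact h.off k hk
  · intro k hk j hj hkj
    by_cases hki : k = i
    · subst hki; rw [Function.update_self, Function.update_of_ne (Ne.symm hkj)]
      exact hd j hj (Ne.symm hkj)
    · rw [Function.update_of_ne hki]
      by_cases hji : j = i
      · subst hji; rw [Function.update_self]
        exact fun x hx hx' => hd k hk hki x hx' hx
      · rw [Function.update_of_ne hji]; exact h.disj k hk j hj hkj

lemma hangWeight_update {i : ℕ} (hi : i < c) (L : ℕ → List V) (L' : List V) :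
    hangWeight c (Function.update L i L') + ((L i).length + min 1 (L i).length) =
      hangWeight c L + (L'.length + min 1 L'.length) := by
  have := sum_range_eq_of_update hi (fun k => (L k).length + min 1 (L k).length)
    (fun k => ((Function.update L i L') k).length + min 1 ((Function.update L i L') k).length)
    (fun k hk => by rw [Function.update_of_ne hk])
  simpa [hangWeight] using this

/-- A neighbour of a tip in `X` lies on the cycle or on a hanging path. -/
lemma nbr_tip_mem (h : Hanging G X c u L)
    (hmax : ∀ L', Hanging G X c u L' → hangWeight c L' ≤ hangWeight c L) {i : ℕ} (hi : i < c)
    {z : V} (hz : G.Adj (tip u L i) z) (hzX : z ∈ X) (hzu : z ∉ Set.range u) :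
    ∃ j < c, z ∈ L j := by
  by_contra! hno
  have h1 := h.update hi (L' := L i ++ [z]) (e := z)
    ((h.pathList hi).concat hz (by
      rw [List.mem_cons, not_or]
      exact ⟨fun e => hzu ⟨i, e.symm⟩, hno i hi⟩))
    (by intro x hx; rcases List.mem_append.1 hx with hx | hx
        · exact h.mem i hi x hx
        · rw [List.mem_singleton.1 hx]; exact hzX)
    (by intro x hx; rcases List.mem_append.1 hx with hx | hx
        · exact h.off i hi x hx
        · rw [List.mem_singleton.1 hx]; exact hzu)
    (by intro j hj hji x hx; rcases List.mem_append.1 hx with hx | hx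
        · exact h.disj i hi j hj hji.symm x hx
        · rw [List.mem_singleton.1 hx]; exact hno j hj)
  have h2 := hmax _ h1
  have h3 := hangWeight_update hi L (L i ++ [z])
  simp only [List.length_append, List.length_singleton] at h3
  omega

/-- Move a final piece of a hanging path to a trivial one. -/
lemma move (h : Hanging G X c u L) {i j : ℕ} (hi : i < c) (hj : j < c) (hL : L i = [])
    {A B : List V} {w : V} (hw : G.Adj (u i) w) (hLj : L j = A ++ w :: B) :
    Hanging G X c u (Function.update (Function.update L j A) i (w :: B)) ∧
    hangWeight c (Function.update (Function.update L j A) i (w :: B)) =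
      hangWeight c L + min 1 A.length := by
  have hij : i ≠ j := by rintro rfl; rw [hL] at hLj; simp at hLj
  have hpj := h.pathList hj
  rw [hLj, ← List.cons_append] at hpj
  have hA : ∃ e, PathList G (u j) (u j :: A) e := by
    have h1 := hpj.1
    rw [List.nodup_append'] at h1
    obtain ⟨x, e, h2⟩ := exists_pathList_of_isChain (L := u j :: A) (by simp) h1.1
      (List.isChain_append.1 hpj.2.1).1
    have : u j = x := by simpa using h2.2.2.1
    exact ⟨e, this ▸ h2⟩
  obtain ⟨e, hA⟩ := hA
  have hsubA : ∀ x ∈ A, x ∈ L j := fun x hx => by rw [hLj]; exact List.mem_append_left _ hx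
  have hsubB : ∀ x ∈ w :: B, x ∈ L j := fun x hx => by rw [hLj]; exact List.mem_append_right _ hx
  have h1 := h.update hj hA (fun x hx => h.mem j hj x (hsubA x hx))
    (fun x hx => h.off j hj x (hsubA x hx))
    (fun k hk hkj x hx => h.disj j hj k hk hkj.symm x (hsubA x hx))
  have hui : u i ∉ w :: B := fun hu => h.off j hj _ (hsubB _ hu) ⟨i, rfl⟩
  have h2 := h1.update hi (hpj.split_right.cons hw hui) (fun x hx => h.mem j hj x (hsubB x hx))
    (fun x hx => h.off j hj x (hsubB x hx))
    (by
      intro k hk hki x hx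
      by_cases hkj : k = j
      · subst hkj
        rw [Function.update_self]
        have := hpj.1
        rw [List.nodup_append'] at this
        exact fun hxA => this.2.2 (List.mem_cons_of_mem _ hxA) hx
      · rw [Function.update_of_ne hkj]
        exact h.disj j hj k hk (Ne.symm hkj) x (hsubB x hx))
  refine ⟨h2, ?_⟩
  have h3 := hangWeight_update hi (Function.update L j A) (w :: B)
  have h4 := hangWeight_update hj L A
  rw [Function.update_of_ne hij, hL] at h3
  rw [hLj] at h4
  simp only [List.length_cons, List.length_append, List.length_nil] at h3 h4
  omega

lemma eq_nil_of_trivial_adj (h : Hanging G X c u L)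
    (hmax : ∀ L', Hanging G X c u L' → hangWeight c L' ≤ hangWeight c L) {i j : ℕ} (hi : i < c)
    (hj : j < c) (hL : L i = [])
    {A B : List V} {w : V} (hw : G.Adj (u i) w) (hLj : L j = A ++ w :: B) : A = [] := by
  obtain ⟨h1, h2⟩ := h.move hi hj hL hw hLj
  have h3 := hmax _ h1
  rw [h2] at h3
  have : A.length = 0 := by omega
  exact List.length_eq_zero_iff.1 this

end Hanging

/-- Packing of disjoint intervals around a cycle. -/
lemma two_mul_card_le_of_packing {c : ℕ} (S : Finset (ℕ × ℕ)) (hS : ∀ x ∈ S, x.1 < c)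
    (hgap : ∀ x ∈ S, ∀ y ∈ S, x.1 < y.1 → x.2 + y.2 + 2 ≤ y.1 - x.1 ∧
      x.2 + y.2 + 2 + (y.1 - x.1) ≤ c)
    (hex : ∀ x ∈ S, ∃ y ∈ S, y.1 ≠ x.1) : 2 * S.card ≤ c := by
  have hsmall : ∀ x ∈ S, 2 * x.2 + 4 ≤ c := by
    intro x hx
    obtain ⟨y, hy, hyx⟩ := hex x hx
    rcases lt_or_gt_of_ne hyx with h | h
    · have := hgap y hy x hx h; omega
    · have := hgap x hx y hy h; omega
  have hcard : (S ×ˢ (Finset.univ : Finset Bool)).card = 2 * S.card := by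
    rw [Finset.card_product, Finset.card_univ, Fintype.card_bool, Nat.mul_comm]
  rw [← hcard]
  calc (S ×ˢ (Finset.univ : Finset Bool)).card ≤ (Finset.range c).card := by
        apply Finset.card_le_card_of_injOn (fun x : (ℕ × ℕ) × Bool =>
          if x.2 then (if x.1.1 + x.1.2 < c then x.1.1 + x.1.2 else x.1.1 + x.1.2 - c)
          else (if x.1.2 + 1 ≤ x.1.1 then x.1.1 - 1 - x.1.2 else x.1.1 + c - 1 - x.1.2))
        · rintro ⟨⟨j, q⟩, β⟩ hx
          simp only [Finset.coe_product, Finset.coe_univ, Set.mem_prod, Finset.mem_coe,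
            Set.mem_univ, and_true] at hx
          have h1 := hS _ hx
          have h2 := hsmall _ hx
          simp only [Finset.coe_range, Set.mem_Iio] at h1 h2 ⊢
          split_ifs <;> omega
        · rintro ⟨⟨j, q⟩, β⟩ hx ⟨⟨j', q'⟩, β'⟩ hx' he
          simp only [Finset.coe_product, Finset.coe_univ, Set.mem_prod, Finset.mem_coe,
            Set.mem_univ, and_true] at hx hx'
          have h1 := hS _ hx
          have h2 := hsmall _ hx
          have h1' := hS _ hx'
          have h2' := hsmall _ hx'
          have h3 := hgap _ hx _ hx'
          have h4 := hgap _ hx' _ hx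
          simp only at h1 h2 h1' h2' h3 h4 he
          rcases lt_trichotomy j j' with h | h | h
          · have h3 := h3 h
            clear h4
            exfalso
            cases β <;> cases β' <;> simp only [if_true, if_false, Bool.false_eq_true] at he <;>
              split_ifs at he <;> omega
          · clear h3 h4
            subst h
            cases β <;> cases β' <;> simp only [if_true, if_false, Bool.false_eq_true] at he <;>
              split_ifs at he <;> first | omega | (congr 2; omega)
          · have h4 := h4 h
            clear h3
            exfalso
            cases β <;> cases β' <;> simp only [if_true, if_false, Bool.false_eq_true] at he <;>
              split_ifs at he <;> omega
    _ = c := Finset.card_range c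

end LongCycle

namespace LongCycle

variable {G : SimpleGraph V} {a b : V} {P Q : List V}

/-- A path whose ends are cycle vertices `k` steps apart and that is otherwise outside the cycle
has at most `k - 1` inner vertices. -/
lemma MaxCycle.length_inner_le {X : Set V} {N : ℕ} {f : ℕ → V} (h : MaxCycle G X N f) {p k : ℕ}
    (hk : 1 ≤ k) (hkN : k ≤ N) (hP : PathList G (f p) (f p :: P ++ [f (p + k)]) (f (p + k)))
    (hX : ∀ x ∈ P, x ∈ X) (hC : ∀ x ∈ P, x ∉ Set.range f) : P.length + 1 ≤ k := by
  rcases P.eq_nil_or_concat with rfl | ⟨P', b, rfl⟩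
  · simpa using hk
  rw [List.concat_eq_append] at *
  have hb : G.Adj b (f (p + k)) := by
    refine PathList.adj_of_append_cons (P := f p :: P') (Q := []) (d := f (p + k)) (a := f p) ?_
    simpa using hP
  obtain ⟨a, b', hab⟩ := exists_pathList_of_isChain (L := P' ++ [b]) (by simp)
    (by
      have := hP.1
      rw [List.cons_append, List.nodup_cons, List.nodup_append'] at this
      exact this.2.1)
    (by
      have := hP.2.1
      rw [List.cons_append, List.isChain_cons, List.isChain_append] at this
      exact this.2.1)
  obtain rfl : b = b' := by simpa using hab.2.2.2
  have ha : G.Adj (f p) a := by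
    have := hP.2.1
    rw [List.cons_append, List.isChain_cons] at this
    refine this.1 a ?_
    rw [List.head?_append, hab.2.2.1]; rfl
  exact h.insert_le hk hkN hab hX hC ha hb

namespace Hanging

variable {X : Set V} {c : ℕ} {u : ℕ → V} {L : ℕ → List V}

lemma index_unique (hQ : MaxCycle G X c u) (h : Hanging G X c u L) {i j : ℕ} (hi : i < c)
    (hj : j < c) {x : V} (hxi : x ∈ u i :: L i) (hxj : x ∈ u j :: L j) : i = j := by
  rw [List.mem_cons] at hxi hxj
  rcases hxi with rfl | hxi
  · rcases hxj with hxj | hxj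
    · exact hQ.inj i j hi hj hxj
    · exact absurd ⟨i, rfl⟩ (h.off j hj _ hxj)
  · rcases hxj with rfl | hxj
    · exact absurd ⟨j, rfl⟩ (h.off i hi _ hxi)
    · by_contra hij
      exact h.disj i hi j hj hij x hxi hxj

/-- The way from the cycle through the `q`-th vertex of the `j`-th path to the `i`-th tip. -/
lemma exists_leg (hQ : MaxCycle G X c u) (h : Hanging G X c u L) {i j q : ℕ} (hi : i < c)
    (hj : j < c) (hL : L i ≠ []) {v : V} (hv : G.Adj (tip u L i) v)
    (hq : (u j :: L j)[q]? = some v) :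
    ∃ W, q ≤ W.length ∧ PathList G (u j) (u j :: W ++ [tip u L i]) (tip u L i) ∧
      ∀ x ∈ W, x ∈ L j := by
  have htip := tip_mem_of_ne_nil (u := u) hL
  by_cases hij : j = i
  · subst hij
    have hne : u j ≠ tip u L j := fun e => h.off j hj _ htip ⟨j, e⟩
    obtain ⟨W, l, hW, hWp, hWa⟩ := (h.pathList hj).exists_eq_cons_concat hne
    refine ⟨W, ?_, hW ▸ h.pathList hj, ?_⟩
    · rw [hW, List.cons_append] at hq
      by_contra hcon
      have hlen := (List.getElem?_eq_some_iff.1 hq).1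
      simp at hlen
      obtain rfl : q = W.length + 1 := by omega
      simp at hq
      exact G.loopless.irrefl _ (hq ▸ hv)
    · intro x hx
      rw [List.cons_append, List.cons.injEq] at hW
      rw [hW.2]; exact List.mem_append_left _ hx
  · have hlen := (List.getElem?_eq_some_iff.1 hq).1
    refine ⟨(L j).take q, by simp at hlen ⊢; omega, ?_, fun x hx => List.mem_of_mem_take hx⟩
    obtain ⟨_, hqv⟩ := List.getElem?_eq_some_iff.1 hq
    have hsp : u j :: L j = (u j :: L j).take q ++ v :: (u j :: L j).drop (q + 1) := by
      rw [← hqv, List.cons_getElem_drop_succ, List.take_append_drop]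
    have h1 : PathList G (u j) ((u j :: L j).take q ++ [v]) v := (hsp ▸ h.pathList hj).split_left
    have h2 : (u j :: L j).take q ++ [v] = u j :: (L j).take q := by
      rw [← hqv, List.take_append_getElem]; simp
    rw [h2] at h1
    refine h1.concat hv.symm ?_
    intro hx
    have : tip u L i ∈ u j :: L j := by
      rcases List.mem_cons.1 hx with hx | hx
      · rw [hx]; exact List.mem_cons_self
      · exact List.mem_cons_of_mem _ (List.mem_of_mem_take hx)
    exact hij (h.index_unique hQ hj hi this (List.mem_cons_of_mem _ htip))

/-- The neighbours of a tip either all lie on its own path, or they are few. -/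
lemma nbrs_tip [Fintype V] (hQ : MaxCycle G X c u) (h : Hanging G X c u L)
    (hmax : ∀ L', Hanging G X c u L' → hangWeight c L' ≤ hangWeight c L) {i : ℕ} (hi : i < c)
    (hL : L i ≠ []) :
    (∀ v ∈ nbrsIn G X (tip u L i), v ∈ u i :: L i) ∨
      2 * (nbrsIn G X (tip u L i)).card ≤ c := by
  classical
  by_cases hown : ∀ v ∈ nbrsIn G X (tip u L i), v ∈ u i :: L i
  · exact Or.inl hown
  right
  push Not at hown
  obtain ⟨v₀, hv₀, hv₀i⟩ := hown
  have htip := tip_mem_of_ne_nil (u := u) hL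
  have hcode : ∀ v : V, ∃ x : ℕ × ℕ, v ∈ nbrsIn G X (tip u L i) →
      x.1 < c ∧ (u x.1 :: L x.1)[x.2]? = some v := by
    intro v
    by_cases hv : v ∈ nbrsIn G X (tip u L i)
    · have : ∃ j < c, v ∈ u j :: L j := by
        rw [mem_nbrsIn] at hv
        by_cases hvu : v ∈ Set.range u
        · obtain ⟨p, rfl⟩ := hvu
          exact ⟨p % c, Nat.mod_lt _ hQ.pos, by rw [hQ.map_mod]; exact List.mem_cons_self⟩
        · obtain ⟨j, hj, hvj⟩ := h.nbr_tip_mem hmax hi hv.1 hv.2 hvu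
          exact ⟨j, hj, List.mem_cons_of_mem _ hvj⟩
      obtain ⟨j, hj, hvj⟩ := this
      obtain ⟨q, hq⟩ := List.mem_iff_getElem?.1 hvj
      exact ⟨(j, q), fun _ => ⟨hj, hq⟩⟩
    · exact ⟨(0, 0), fun hv' => absurd hv' hv⟩
  choose κ hκ using hcode
  have hinj : Set.InjOn κ (nbrsIn G X (tip u L i) : Set V) := by
    intro v hv w hw e
    have h1 := (hκ v hv).2
    have h2 := (hκ w hw).2
    rw [e, h2] at h1
    exact (Option.some.inj h1).symm
  have hmemκ : ∀ v ∈ nbrsIn G X (tip u L i), v ∈ u (κ v).1 :: L (κ v).1 :=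
    fun v hv => List.mem_of_getElem? (hκ v hv).2
  rw [← Finset.card_image_of_injOn hinj]
  refine two_mul_card_le_of_packing _ ?_ ?_ ?_
  · intro x hx
    obtain ⟨v, hv, rfl⟩ := Finset.mem_image.1 hx
    exact (hκ v hv).1
  · intro x hx y hy hxy
    obtain ⟨v, hv, rfl⟩ := Finset.mem_image.1 hx
    obtain ⟨w, hw, rfl⟩ := Finset.mem_image.1 hy
    have hjc := (hκ v hv).1
    have hjc' := (hκ w hw).1
    obtain ⟨W, hWl, hWp, hWm⟩ := h.exists_leg hQ hi hjc hL (mem_nbrsIn.1 hv).1 (hκ v hv).2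
    obtain ⟨W', hWl', hWp', hWm'⟩ := h.exists_leg hQ hi hjc' hL (mem_nbrsIn.1 hw).1 (hκ w hw).2
    generalize hj : (κ v).1 = j at *
    generalize hj' : (κ w).1 = j' at *
    have hWe : tip u L i ∉ u j :: W := fun hx => by
      have := hWp.1; rw [List.nodup_append'] at this; exact this.2.2 hx (by simp)
    have hWe' : tip u L i ∉ u j' :: W' := fun hx => by
      have := hWp'.1; rw [List.nodup_append'] at this; exact this.2.2 hx (by simp)
    have h1 := hWp.reverse
    have h2 := hWp'.reverse
    simp only [List.reverse_append, List.reverse_cons, List.reverse_nil, List.nil_append,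
      List.singleton_append] at h1 h2
    have hsub : ∀ x ∈ u j :: W, x ∈ u j :: L j := by
      intro x hx
      rcases List.mem_cons.1 hx with rfl | hx
      · simp
      · exact List.mem_cons_of_mem _ (hWm x hx)
    have hsub' : ∀ x ∈ u j' :: W', x ∈ u j' :: L j' := by
      intro x hx
      rcases List.mem_cons.1 hx with rfl | hx
      · simp
      · exact List.mem_cons_of_mem _ (hWm' x hx)
    have h3 := PathList.detour h1 (PathList.single _) h2
      (by intro x hx hx'
          rw [List.mem_singleton.1 hx'] at hx
          exact hWe (by simpa [or_comm] using hx))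
      (by intro x hx hx'
          rw [List.mem_singleton.1 hx'] at hx
          exact hWe' (by simpa [or_comm] using hx))
      (by intro x hx hx'
          have e1 := hsub x (by simpa [or_comm] using hx)
          have e2 := hsub' x (by simpa [or_comm] using hx')
          exact hxy.ne (h.index_unique hQ hjc hjc' e1 e2))
    set M := W ++ tip u L i :: W'.reverse with hM
    have hML : M.length = W.length + W'.length + 1 := by simp [hM]; omega
    have h4 : PathList G (u j) (u j :: M ++ [u j']) (u j') := by
      simpa [hM] using h3
    have hMi : ∀ x ∈ M, ∃ k < c, x ∈ L k := by
      intro x hx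
      simp only [hM, List.mem_append, List.mem_cons, List.mem_reverse] at hx
      rcases hx with hx | rfl | hx
      · exact ⟨j, hjc, hWm x hx⟩
      · exact ⟨i, hi, htip⟩
      · exact ⟨j', hjc', hWm' x hx⟩
    have hMX : ∀ x ∈ M, x ∈ X := fun x hx => by
      obtain ⟨k, hk, hxk⟩ := hMi x hx; exact h.mem k hk x hxk
    have hMu : ∀ x ∈ M, x ∉ Set.range u := fun x hx => by
      obtain ⟨k, hk, hxk⟩ := hMi x hx; exact h.off k hk x hxk
    constructor
    · have := hQ.length_inner_le (p := j) (k := j' - j) (P := M) (by omega) (by omega)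
        (by rw [show j + (j' - j) = j' by omega]; exact h4) hMX hMu
      omega
    · have := hQ.length_inner_le (p := j') (k := c - (j' - j)) (P := M.reverse) (by omega)
        (by omega)
        (by
          rw [show j' + (c - (j' - j)) = j + c by omega, hQ.per]
          simpa using h4.reverse) (by simpa using hMX) (by simpa using hMu)
      rw [List.length_reverse] at this
      omega
  · have hne : u i ≠ tip u L i := fun e => h.off i hi _ htip ⟨i, e⟩
    obtain ⟨W, l, hW, hWp, hWa⟩ := (h.pathList hi).exists_eq_cons_concat hne
    have hlm : l ∈ u i :: L i := by rw [hW]; exact List.mem_append_left _ hWp.last_mem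
    have hlX : l ∈ X := by
      rcases List.mem_cons.1 hlm with rfl | hl
      · exact hQ.mem i
      · exact h.mem i hi l hl
    have hlN : l ∈ nbrsIn G X (tip u L i) := mem_nbrsIn.2 ⟨hWa.symm, hlX⟩
    have hlκ : (κ l).1 = i := h.index_unique hQ (hκ l hlN).1 hi (hmemκ l hlN) hlm
    have hvκ : (κ v₀).1 ≠ i := fun e => hv₀i (e ▸ hmemκ v₀ hv₀)
    intro x _
    by_cases hx : x.1 = i
    · exact ⟨_, Finset.mem_image_of_mem _ hv₀, by rw [hx]; exact hvκ⟩
    · exact ⟨_, Finset.mem_image_of_mem _ hlN, by rw [hlκ]; exact Ne.symm hx⟩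

end Hanging

end LongCycle

namespace LongCycle

variable {G : SimpleGraph V} {a b : V} {P Q : List V}

lemma exists_forall_le_of_bounded {α : Type*} (p : α → Prop) (hne : ∃ x, p x) (F : α → ℕ) (B : ℕ)
    (hB : ∀ x, p x → F x ≤ B) : ∃ x, p x ∧ ∀ y, p y → F y ≤ F x := by
  classical
  obtain ⟨x, hx⟩ := hne
  have h1 := Nat.findGreatest_spec (P := fun k => ∃ x, p x ∧ F x = k) (hB x hx) ⟨x, hx, rfl⟩
  obtain ⟨y, hy, hyF⟩ := h1
  refine ⟨y, hy, fun z hz => ?_⟩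
  rw [hyF]
  exact Nat.le_findGreatest (hB z hz) ⟨z, hz, rfl⟩

open Classical in
/-- The matched indices whose partner lies on their own hanging path. -/
noncomputable def goodIdx (Mt : Finset ℕ) (y : ℕ → V) (L : ℕ → List V) : Finset ℕ :=
  Mt.filter fun i => y i ∈ L i

lemma mem_goodIdx {Mt : Finset ℕ} {y : ℕ → V} {L : ℕ → List V} {i : ℕ} :
    i ∈ goodIdx Mt y L ↔ i ∈ Mt ∧ y i ∈ L i := by simp [goodIdx]

/-- The total number of neighbours of the tips. -/
noncomputable def tipCost [Fintype V] (G : SimpleGraph V) (X : Set V) (c : ℕ) (u : ℕ → V)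
    (L : ℕ → List V) : ℕ := ∑ i ∈ Finset.range c, (nbrsIn G X (tip u L i)).card

/-- A lexicographically optimal system of hanging paths: maximal weight, then as many good indices
as possible, then as few neighbours of tips as possible. -/
structure OptHanging [Fintype V] (G : SimpleGraph V) (X : Set V) (c : ℕ) (u : ℕ → V)
    (Mt : Finset ℕ) (y : ℕ → V) (L : ℕ → List V) : Prop where
  hang : Hanging G X c u L
  weight : ∀ L', Hanging G X c u L' → hangWeight c L' ≤ hangWeight c L
  good : ∀ L', Hanging G X c u L' → hangWeight c L' = hangWeight c L →
    (goodIdx Mt y L').card ≤ (goodIdx Mt y L).card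
  cost : ∀ L', Hanging G X c u L' → hangWeight c L' = hangWeight c L →
    (goodIdx Mt y L').card = (goodIdx Mt y L).card → tipCost G X c u L ≤ tipCost G X c u L'

lemma exists_optHanging [Fintype V] (G : SimpleGraph V) (X : Set V) (c : ℕ) (u : ℕ → V)
    (Mt : Finset ℕ) (y : ℕ → V) : ∃ L, OptHanging G X c u Mt y L := by
  have h0 : Hanging G X c u fun _ => [] := by constructor <;> simp
  obtain ⟨L₁, h1, hm1⟩ := exists_forall_le_of_bounded (Hanging G X c u) ⟨_, h0⟩ (hangWeight c)
    (c * (Fintype.card V + 1)) (by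
      intro L hL
      refine (Finset.sum_le_card_nsmul _ _ (Fintype.card V + 1) ?_).trans (by simp)
      intro i hi
      have := (hL.nodup i (Finset.mem_range.1 hi)).length_le_card
      omega)
  obtain ⟨L₂, h2, hm2⟩ := exists_forall_le_of_bounded
    (fun L => Hanging G X c u L ∧ hangWeight c L = hangWeight c L₁) ⟨_, h1, rfl⟩
    (fun L => (goodIdx Mt y L).card) Mt.card (fun L _ => by
      classical exact Finset.card_filter_le _ _)
  obtain ⟨L₃, h3, hm3⟩ := exists_forall_le_of_bounded
    (fun L => Hanging G X c u L ∧ hangWeight c L = hangWeight c L₁ ∧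
      (goodIdx Mt y L).card = (goodIdx Mt y L₂).card) ⟨_, h2.1, h2.2, rfl⟩
    (fun L => c * Fintype.card V - tipCost G X c u L) _ (fun L _ => Nat.sub_le _ _)
  have hcost : ∀ L, tipCost G X c u L ≤ c * Fintype.card V := fun L =>
    (Finset.sum_le_card_nsmul _ _ (Fintype.card V) (fun i _ => Finset.card_le_univ _)).trans
      (by simp)
  refine ⟨L₃, h3.1, fun L hL => h3.2.1 ▸ hm1 L hL, ?_, ?_⟩
  · intro L hL hw
    rw [h3.2.2]
    exact hm2 L ⟨hL, hw.trans h3.2.1⟩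
  · intro L hL hw hg
    have h4 := hm3 L ⟨hL, hw.trans h3.2.1, hg.trans h3.2.2⟩
    have h5 := hcost L
    have h6 := hcost L₃
    omega

namespace OptHanging

variable [Fintype V] {X : Set V} {c : ℕ} {u : ℕ → V} {Mt : Finset ℕ} {y : ℕ → V} {L : ℕ → List V}

/-- The partner of a trivial matched index lies outside of `X`. -/
lemma partner_notMem (h : OptHanging G X c u Mt y L)
    (hMt : ∀ i ∈ Mt, i < c) (hadj : ∀ i ∈ Mt, G.Adj (u i) (y i))
    (hyu : ∀ i ∈ Mt, y i ∉ Set.range u) (hinj : ∀ i ∈ Mt, ∀ j ∈ Mt, y i = y j → i = j)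
    {i : ℕ} (hi : i ∈ Mt) (hL : L i = []) : y i ∉ X := by
  intro hX
  have hic := hMt i hi
  have htip := tip_eq_of_nil (u := u) hL
  obtain ⟨j, hj, hyj⟩ := h.hang.nbr_tip_mem h.weight hic (by rw [htip]; exact hadj i hi) hX
    (hyu i hi)
  obtain ⟨A, B, hAB⟩ := List.append_of_mem hyj
  obtain rfl := h.hang.eq_nil_of_trivial_adj h.weight hic hj hL (hadj i hi) hAB
  obtain ⟨h1, h2⟩ := h.hang.move hic hj hL (hadj i hi) hAB
  simp only [List.length_nil, Nat.min_zero, Nat.add_zero, List.nil_append] at h2 hAB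
  have hij : i ≠ j := by rintro rfl; rw [hL] at hAB; simp at hAB
  set L' := Function.update (Function.update L j []) i (y i :: B) with hL'
  have hL'i : L' i = y i :: B := by simp [hL']
  have hL'j : L' j = [] := by simp [hL', hij.symm]
  have hjg : j ∉ goodIdx Mt y L := by
    intro hjg
    obtain ⟨hjM, hyjL⟩ := mem_goodIdx.1 hjg
    rw [hAB, List.mem_cons] at hyjL
    rcases hyjL with e | hB
    · exact hij (hinj j hjM i hi e).symm
    · obtain ⟨B1, B2, rfl⟩ := List.append_of_mem hB
      have := h1.eq_nil_of_trivial_adj (fun L'' hL'' => h2 ▸ h.weight L'' hL'') hj hic hL'j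
        (hadj j hjM) (A := y i :: B1) (B := B2) (by rw [hL'i]; simp)
      simp at this
  have hsub : insert i (goodIdx Mt y L) ⊆ goodIdx Mt y L' := by
    intro k hk
    rcases Finset.mem_insert.1 hk with rfl | hk
    · exact mem_goodIdx.2 ⟨hi, by rw [hL'i]; simp⟩
    · have hkj : k ≠ j := fun e => hjg (e ▸ hk)
      obtain ⟨hk1, hk2⟩ := mem_goodIdx.1 hk
      have hki : k ≠ i := by rintro rfl; rw [hL] at hk2; simp at hk2
      exact mem_goodIdx.2 ⟨hk1, by simpa [hL', hki, hkj] using hk2⟩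
  have hig : i ∉ goodIdx Mt y L := fun hig => by
    have := (mem_goodIdx.1 hig).2
    rw [hL] at this; simp at this
  have h3 := Finset.card_le_card hsub
  rw [Finset.card_insert_of_notMem hig] at h3
  have h4 := h.good L' h1 h2
  omega

lemma card_nbrs_tip_lt (hQ : MaxCycle G X c u) (h : OptHanging G X c u Mt y L) {μ : ℕ}
    (hμ : 1 ≤ μ) (hc : c + 3 ≤ 2 * μ ∨ c = μ)
    (hF : ∀ R : Finset V, (∀ x ∈ R, x ∈ X) → μ + 1 ≤ R.card → (∀ x ∈ R, ∀ y ∈ R, x ≠ y →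
      ∃ P, PathList G x P y ∧ (∀ z ∈ P, z ∈ R) ∧ μ ≤ P.length) → False)
    {j : ℕ} (hj : j < c) (hL : L j ≠ []) : (nbrsIn G X (tip u L j)).card + 1 ≤ μ := by
  classical
  by_contra hcon
  have hmemX : ∀ x ∈ u j :: L j, x ∈ X := by
    intro x hx
    rcases List.mem_cons.1 hx with rfl | hx
    · exact hQ.mem j
    · exact h.hang.mem j hj x hx
  obtain ⟨R, hR1, hR2, hR3⟩ := exists_wellLinked_of_dense (X := X) (μ := μ)
    (h.hang.pathList hj) hmemX (nbrsIn G X) (fun v w hw => (mem_nbrsIn.1 hw).1) (by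
      intro ρ e hρ hperm
      obtain ⟨x, L', rfl⟩ := List.exists_cons_of_ne_nil hρ.ne_nil
      obtain rfl : x = u j := by simpa using hρ.2.2.1
      have hp : L'.Perm (L j) := (List.perm_cons _).1 hperm
      have h1 := h.hang.update hj hρ (fun x hx => h.hang.mem j hj x (hp.mem_iff.1 hx))
        (fun x hx => h.hang.off j hj x (hp.mem_iff.1 hx))
        (fun k hk hkj x hx => h.hang.disj j hj k hk hkj.symm x (hp.mem_iff.1 hx))
      have h2 := Hanging.hangWeight_update hj L L'
      rw [hp.length_eq] at h2
      have h3 : hangWeight c (Function.update L j L') = hangWeight c L := by omega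
      have h4 : goodIdx Mt y (Function.update L j L') = goodIdx Mt y L := by
        ext k
        rw [mem_goodIdx, mem_goodIdx]
        by_cases hkj : k = j
        · subst hkj; rw [Function.update_self, hp.mem_iff]
        · rw [Function.update_of_ne hkj]
      have h5 := h.cost _ h1 h3 (by rw [h4])
      have htip : tip u (Function.update L j L') j = e :=
        h1.tip_eq hj (by rw [Function.update_self]; exact hρ)
      have h6 := sum_range_eq_of_update hj (fun k => (nbrsIn G X (tip u L k)).card)
        (fun k => (nbrsIn G X (tip u (Function.update L j L') k)).card)
        (fun k hk => by simp only [tip, Function.update_of_ne hk])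
      simp only [htip] at h6
      simp only [tipCost] at h5
      have h7 : μ ≤ (nbrsIn G X e).card := by omega
      refine ⟨h7, ?_⟩
      rcases h1.nbrs_tip hQ (fun L'' hL'' => h3 ▸ h.weight L'' hL'') hj
        (by rw [Function.update_self]; intro e; rw [e] at hp; exact hL hp.nil_eq.symm) with h8 | h8
      · rw [htip, Function.update_self] at h8
        exact fun w hw => hperm.mem_iff.1 (h8 w hw)
      · rw [htip] at h8
        omega) hμ
    (by
      intro M hM hMX hMl
      have := hQ.max M hM hMX
      omega)
  exact hF R (fun x hx => hmemX x (hR1 x hx)) hR2 hR3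

end OptHanging

end LongCycle

namespace LongCycle

variable {G : SimpleGraph V} {a b : V} {P Q : List V}

open Classical in
/-- The positions on the cycle `f` adjacent to `v`. -/
noncomputable def attach (G : SimpleGraph V) (f : ℕ → V) (N : ℕ) (v : V) : Finset ℕ :=
  (Finset.range N).filter fun p => G.Adj v (f p)

lemma mem_attach {f : ℕ → V} {N : ℕ} {v : V} {p : ℕ} :
    p ∈ attach G f N v ↔ p < N ∧ G.Adj v (f p) := by simp [attach]

lemma MaxCycle.card_nbrs_le [Fintype V] {X : Set V} {N : ℕ} {f : ℕ → V} (h : MaxCycle G X N f)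
    (v : V) : (nbrs G v).card ≤
      (attach G f N v).card + (nbrsIn G (Set.range f)ᶜ v).card := by
  classical
  have hsub : nbrs G v ⊆ (attach G f N v).image f ∪ nbrsIn G (Set.range f)ᶜ v := by
    intro w hw
    rw [mem_nbrs] at hw
    rw [Finset.mem_union, Finset.mem_image, mem_nbrsIn]
    by_cases hwf : w ∈ Set.range f
    · obtain ⟨p, rfl⟩ := hwf
      left
      refine ⟨p % N, mem_attach.2 ⟨Nat.mod_lt _ h.pos, ?_⟩, h.map_mod p⟩
      rw [h.map_mod]; exact hw
    · exact Or.inr ⟨hw, hwf⟩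
  exact (Finset.card_le_card hsub).trans ((Finset.card_union_le _ _).trans
    (Nat.add_le_add_right Finset.card_image_le _))

/-- Vertices `E i` outside the cycle `f` with weights `ω i`, joined to each other by long paths
outside the cycle. -/
structure Charging (G : SimpleGraph V) (f : ℕ → V) (c : ℕ) (E : ℕ → V) (τ ω : ℕ → ℕ) : Prop where
  off : ∀ i < c, E i ∉ Set.range f
  weight : ∀ i < c, ω i = 2 ∨ ω i = 3 ∧ c + 1 ≤ 2 * τ i ∧ 3 ≤ c
  link : ∀ i < c, ∀ j < c, i < j → ∃ P, PathList G (E i) P (E j) ∧ (∀ x ∈ P, x ∉ Set.range f) ∧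
    τ i + τ j + 1 + (j - i) ≤ P.length ∧ τ i + τ j + 1 + (c - (j - i)) ≤ P.length

lemma Hanging.link {X : Set V} {c : ℕ} {u : ℕ → V} {L : ℕ → List V} (hQ : MaxCycle G X c u)
    (h : Hanging G X c u L) {i j : ℕ} (hj : j < c) (hij : i < j) :
    ∃ P, PathList G (tip u L i) P (tip u L j) ∧ (∀ x ∈ P, x ∈ X) ∧
      (L i).length + (L j).length + 1 + (j - i) ≤ P.length ∧
      (L i).length + (L j).length + 1 + (c - (j - i)) ≤ P.length := by
  have hi : i < c := hij.trans hj
  have key : ∀ M, PathList G (u i) M (u j) → (∀ x ∈ M, x ∈ Set.range u) →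
      j - i + 1 ≤ M.length → c - (j - i) + 1 ≤ M.length →
      ∃ P, PathList G (tip u L i) P (tip u L j) ∧ (∀ x ∈ P, x ∈ X) ∧
      (L i).length + (L j).length + 1 + (j - i) ≤ P.length ∧
      (L i).length + (L j).length + 1 + (c - (j - i)) ≤ P.length := by
    intro M hM hMu h1 h2
    refine ⟨_, PathList.detour (h.pathList hi) hM (h.pathList hj)
      (fun x hx hx' => h.off i hi x hx (hMu x hx'))
      (fun x hx hx' => h.off j hj x hx (hMu x hx'))
      (h.disj i hi j hj hij.ne), ?_, ?_, ?_⟩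
    · intro x hx
      simp only [List.mem_append, List.mem_reverse] at hx
      rcases hx with (hx | hx) | hx
      · exact h.mem i hi x hx
      · obtain ⟨p, rfl⟩ := hMu x hx; exact hQ.mem p
      · exact h.mem j hj x hx
    all_goals simp only [List.length_append, List.length_reverse]; omega
  rcases le_total (c - (j - i)) (j - i) with hle | hle
  · exact key (arc u i (j - i + 1)) (hQ.arc_pathList (by omega) (by omega) (by omega))
      (fun x hx => mem_range_of_mem_arc hx) (by simp) (by simp; omega)
  · refine key (arc u j (c - (j - i) + 1)).reverse ?_
      (fun x hx => mem_range_of_mem_arc (List.mem_reverse.1 hx)) (by simp; omega) (by simp)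
    have := (hQ.arc_pathList (s := j) (len := c - (j - i) + 1) (e := i + c)
      (by omega) (by omega) (by omega)).reverse
    rwa [hQ.per] at this

open Classical in
/-- A vertex outside a longest cycle has no two consecutive neighbours on it. -/
lemma MaxCycle.two_mul_card_nbrs_le {X : Set V} {c : ℕ} {u : ℕ → V} (hQ : MaxCycle G X c u)
    {t : V} (htX : t ∈ X) (htu : t ∉ Set.range u) :
    2 * ((Finset.range c).filter fun i => G.Adj (u i) t).card ≤ c := by
  set A := (Finset.range c).filter fun i => G.Adj (u i) t with hA
  have hc := hQ.pos
  have hno : ∀ p, G.Adj (u p) t → ¬ G.Adj (u (p + 1)) t := by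
    intro p h1 h2
    have := hQ.insert_le (p := p) (k := 1) le_rfl hc (PathList.single t) (by simpa using htX)
      (by simpa using htu) h1 h2.symm
    simp at this
  have hinj : Set.InjOn (fun p => (p + 1) % c) (A : Set ℕ) := by
    intro p hp q hq e
    simp only [hA, Finset.coe_filter, Finset.mem_range, Set.mem_ofPred_eq] at hp hq
    have : p % c = q % c := Nat.ModEq.add_right_cancel' 1 e
    rwa [Nat.mod_eq_of_lt hp.1, Nat.mod_eq_of_lt hq.1] at this
  have hdisj : Disjoint A (A.image fun p => (p + 1) % c) := by
    rw [Finset.disjoint_left]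
    intro p hp hp'
    obtain ⟨q, hq, rfl⟩ := Finset.mem_image.1 hp'
    rw [hA, Finset.mem_filter] at hp hq
    rw [hQ.map_mod] at hp
    exact hno q hq.2 hp.2
  have h1 : A ∪ A.image (fun p => (p + 1) % c) ⊆ Finset.range c := by
    refine Finset.union_subset (Finset.filter_subset _ _) ?_
    intro p hp
    obtain ⟨q, hq, rfl⟩ := Finset.mem_image.1 hp
    exact Finset.mem_range.2 (Nat.mod_lt _ hc)
  have h2 := Finset.card_le_card h1
  rw [Finset.card_union_of_disjoint hdisj, Finset.card_image_of_injOn hinj,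
    Finset.card_range] at h2
  omega

open Classical in
lemma OptHanging.card_nbrs_trivial_le [Fintype V] {X : Set V} {c : ℕ} {u : ℕ → V}
    {Mt : Finset ℕ} {y : ℕ → V} {L : ℕ → List V} (hQ : MaxCycle G X c u)
    (h : OptHanging G X c u Mt y L) {i : ℕ} (hi : i < c) (hL : L i = []) :
    (nbrsIn G X (u i)).card + 1 ≤
      c + ((Finset.range c).filter fun j => ∃ t ∈ (L j).head?, G.Adj (u i) t).card := by
  set A := (Finset.range c).filter fun j => ∃ t ∈ (L j).head?, G.Adj (u i) t with hA
  have hsub : nbrsIn G X (u i) ⊆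
      ((Finset.range c).erase i).image u ∪ A.image (fun j => ((L j).head?).getD (u i)) := by
    intro w hw
    rw [mem_nbrsIn] at hw
    rw [Finset.mem_union, Finset.mem_image, Finset.mem_image]
    by_cases hwu : w ∈ Set.range u
    · obtain ⟨p, rfl⟩ := hwu
      left
      refine ⟨p % c, Finset.mem_erase.2 ⟨?_, Finset.mem_range.2 (Nat.mod_lt _ hQ.pos)⟩,
        hQ.map_mod p⟩
      rintro e
      rw [← hQ.map_mod p, e] at hw
      exact G.loopless.irrefl _ hw.1
    · right
      obtain ⟨j, hj, hwj⟩ := h.hang.nbr_tip_mem h.weight hi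
        (by rw [tip_eq_of_nil hL]; exact hw.1) hw.2 hwu
      obtain ⟨A', B, hAB⟩ := List.append_of_mem hwj
      obtain rfl := h.hang.eq_nil_of_trivial_adj h.weight hi hj hL hw.1 hAB
      refine ⟨j, ?_, by simp [hAB]⟩
      rw [hA, Finset.mem_filter, Finset.mem_range]
      exact ⟨hj, w, by simp [hAB], hw.1⟩
  have h1 := (Finset.card_le_card hsub).trans ((Finset.card_union_le _ _).trans
    (Nat.add_le_add Finset.card_image_le Finset.card_image_le))
  rw [Finset.card_erase_of_mem (Finset.mem_range.2 hi), Finset.card_range] at h1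
  omega

open Classical in
/-- The charging system given by an optimal system of hanging paths. -/
lemma exists_charging [Fintype V] {N c δ μ M : ℕ} {f u : ℕ → V} (hC : MaxCycle G Set.univ N f)
    (hQ : MaxCycle G (Set.range f)ᶜ c u) (hdeg : ∀ v, δ ≤ (nbrs G v).card) (hμ : 1 ≤ μ)
    (hμM : μ ≤ M) (hδ : δ + 1 = M + μ) (hμc : μ ≤ c) (hc : c + 3 ≤ 2 * μ ∨ c = μ)
    (hF : ∀ R : Finset V, (∀ x ∈ R, x ∈ (Set.range f)ᶜ) → μ + 1 ≤ R.card →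
      (∀ x ∈ R, ∀ y ∈ R, x ≠ y →
        ∃ P, PathList G x P y ∧ (∀ z ∈ P, z ∈ R) ∧ μ ≤ P.length) → False)
    (Mt : Finset ℕ) (y : ℕ → V)
    (hMt : ∀ i ∈ Mt, i < c) (hadj : ∀ i ∈ Mt, G.Adj (u i) (y i))
    (hyu : ∀ i ∈ Mt, y i ∉ Set.range u) (hinj : ∀ i ∈ Mt, ∀ j ∈ Mt, y i = y j → i = j) :
    ∃ E τ ω, Charging G f c E τ ω ∧
      2 * c * (δ + 1 - c) ≤ ∑ i ∈ Finset.range c, ω i * (attach G f N (E i)).card ∧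
      ∀ i ∈ Mt, (y i ∈ Set.range f ∧ G.Adj (E i) (y i)) ∨ M ≤ (attach G f N (E i)).card := by
  obtain ⟨L, hL⟩ := exists_optHanging G (Set.range f)ᶜ c u Mt y
  set X := (Set.range f)ᶜ with hX
  have htip : ∀ j < c, L j ≠ [] → (nbrsIn G X (tip u L j)).card + 1 ≤ μ :=
    fun j hj hLj => hL.card_nbrs_tip_lt hQ hμ hc hF hj hLj
  have hbig : ∀ j < c, L j ≠ [] → M ≤ (attach G f N (tip u L j)).card := by
    intro j hj hLj
    have h1 := htip j hj hLj
    have h2 := hC.card_nbrs_le (tip u L j)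
    have h3 := hdeg (tip u L j)
    rw [← hX] at h2
    omega
  have htipX : ∀ i < c, tip u L i ∈ X := by
    intro i hi
    by_cases hLi : L i = []
    · rw [tip_eq_of_nil hLi]; exact hQ.mem i
    · exact hL.hang.mem i hi _ (Hanging.tip_mem_of_ne_nil hLi)
  set ω : ℕ → ℕ := fun i => if L i ≠ [] ∧ c < 2 * (nbrsIn G X (tip u L i)).card then 3 else 2
    with hω
  refine ⟨tip u L, fun i => (L i).length, ω, ⟨fun i hi => htipX i hi, ?_, ?_⟩, ?_, ?_⟩
  · intro i hi
    by_cases hcase : L i ≠ [] ∧ c < 2 * (nbrsIn G X (tip u L i)).card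
    · right
      obtain ⟨hLi, hbigger⟩ := hcase
      have h1 := htip i hi hLi
      refine ⟨if_pos ⟨hLi, hbigger⟩, ?_, by omega⟩
      rcases hL.hang.nbrs_tip hQ hL.weight hi hLi with h2 | h2
      · have h3 : nbrsIn G X (tip u L i) ⊆ (u i :: L i).toFinset.erase (tip u L i) := by
          intro v hv
          rw [Finset.mem_erase, List.mem_toFinset]
          refine ⟨?_, h2 v hv⟩
          rintro rfl
          exact G.loopless.irrefl _ (mem_nbrsIn.1 hv).1
        have h4 := Finset.card_le_card h3
        rw [Finset.card_erase_of_mem (List.mem_toFinset.2 (hL.hang.pathList hi).last_mem)] at h4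
        have h5 := List.toFinset_card_le (u i :: L i)
        simp only [List.length_cons] at h5
        omega
      · omega
    · exact Or.inl (if_neg hcase)
  · intro i _ j hj hij
    exact hL.hang.link hQ hj hij
  · set R : ℕ → ℕ → Prop := fun i j => L i = [] ∧ ∃ t ∈ (L j).head?, G.Adj (u i) t with hR
    have hpt : ∀ i ∈ Finset.range c,
        2 * (δ + 1 - c) + 2 * ((Finset.range c).filter fun k => R k i).card ≤
        ω i * (attach G f N (tip u L i)).card +
          2 * ((Finset.range c).filter fun j => R i j).card := by
      intro i hi
      have hi := Finset.mem_range.1 hi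
      have h1 := hC.card_nbrs_le (tip u L i)
      have h2 := hdeg (tip u L i)
      rw [← hX] at h1
      by_cases hLi : L i = []
      · have h3 := hL.card_nbrs_trivial_le hQ hi hLi
        have h4 : ((Finset.range c).filter fun k => R k i) = ∅ := by
          rw [Finset.filter_eq_empty_iff]
          rintro k - ⟨-, t, ht, -⟩
          simp [hLi] at ht
        have h5 : ((Finset.range c).filter fun j => R i j) =
            (Finset.range c).filter fun j => ∃ t ∈ (L j).head?, G.Adj (u i) t := by
          apply Finset.filter_congr
          simp [hR, hLi]
        have h6 : ω i = 2 := if_neg (by simp [hLi])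
        rw [h4, h5, h6, Finset.card_empty]
        rw [tip_eq_of_nil hLi] at *
        omega
      · obtain ⟨t, B, hB⟩ := List.exists_cons_of_ne_nil hLi
        have htX : t ∈ X := hL.hang.mem i hi t (by simp [hB])
        have htu : t ∉ Set.range u := hL.hang.off i hi t (by simp [hB])
        have h3 := hQ.two_mul_card_nbrs_le htX htu
        have hut : G.Adj (u i) t := by
          have := hL.hang.chain i hi
          rw [hB] at this
          exact (List.isChain_cons_cons.1 this).1
        have h4 : insert i ((Finset.range c).filter fun k => R k i) ⊆
            (Finset.range c).filter fun k => G.Adj (u k) t := by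
          intro k hk
          rcases Finset.mem_insert.1 hk with rfl | hk
          · exact Finset.mem_filter.2 ⟨Finset.mem_range.2 hi, hut⟩
          · obtain ⟨hk1, -, t', ht', hk2⟩ := Finset.mem_filter.1 hk
            have : t' = t := by simpa [hB, eq_comm] using ht'
            exact Finset.mem_filter.2 ⟨hk1, this ▸ hk2⟩
        have h5 := Finset.card_le_card h4
        rw [Finset.card_insert_of_notMem (by
          rw [Finset.mem_filter]; rintro ⟨-, h, -⟩; exact hLi h)] at h5
        have h6 := hbig i hi hLi
        by_cases hcase : c < 2 * (nbrsIn G X (tip u L i)).card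
        · have h7 : ω i = 3 := if_pos ⟨hLi, hcase⟩
          rw [h7]
          omega
        · have h7 : ω i = 2 := if_neg (fun hh => hcase hh.2)
          rw [h7]
          omega
    have h1 := Finset.sum_le_sum hpt
    rw [Finset.sum_add_distrib, Finset.sum_add_distrib, Finset.sum_const, Finset.card_range,
      ← Finset.mul_sum, ← Finset.mul_sum] at h1
    have h2 : ∑ i ∈ Finset.range c, ((Finset.range c).filter fun j => R i j).card =
        ∑ i ∈ Finset.range c, ((Finset.range c).filter fun k => R k i).card :=
      Finset.sum_card_bipartiteAbove_eq_sum_card_bipartiteBelow R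
    rw [h2] at h1
    have h3 : c • (2 * (δ + 1 - c)) = 2 * c * (δ + 1 - c) := by
      rw [smul_eq_mul]; ring
    rw [h3] at h1
    omega
  · intro i hi
    by_cases hLi : L i = []
    · left
      have := hL.partner_notMem hMt hadj hyu hinj hi hLi
      rw [tip_eq_of_nil hLi]
      exact ⟨by simpa [hX] using this, hadj i hi⟩
    · exact Or.inr (hbig i (hMt i hi) hLi)

end LongCycle

namespace LongCycle

variable {G : SimpleGraph V} {a b : V} {P Q : List V}

/-- The longer one of the two distances of `i` and `j` around a cycle of length `c`. -/
def span (c i j : ℕ) : ℕ := max (i - j + (j - i)) (c - (i - j + (j - i)))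

lemma span_comm (c i j : ℕ) : span c i j = span c j i := by
  rw [span, span, Nat.add_comm]

/-- A large set of residues contains one far away from a given residue. -/
lemma exists_far_index {c i : ℕ} (hi : i < c) (B : Finset ℕ) (hB : ∀ j ∈ B, j < c)
    (hne : ∃ j ∈ B, j ≠ i) : ∃ j ∈ B, j ≠ i ∧ c + B.card ≤ 2 * span c i j + 2 := by
  by_contra! hcon
  obtain ⟨j₀, hj₀, hj₀i⟩ := hne
  have hpos : 1 ≤ (B.erase i).card := Finset.card_pos.2 ⟨j₀, Finset.mem_erase.2 ⟨hj₀i, hj₀⟩⟩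
  have hle : B.card ≤ (B.erase i).card + 1 := by
    have := Finset.pred_card_le_card_erase (s := B) (a := i)
    omega
  have hBe := Finset.card_erase_le (s := B) (a := i)
  have hj₀c := hB j₀ hj₀
  have key : (B.erase i).card ≤
      (Finset.Icc (c - (c + B.card - 3) / 2) ((c + B.card - 3) / 2)).card := by
    apply Finset.card_le_card_of_injOn (fun j => if i < j then j - i else j + c - i)
    · intro j hj
      have hj := Finset.mem_erase.1 (Finset.mem_coe.1 hj)
      have h1 := hB j hj.2
      have h2 := hcon j hj.2 hj.1
      have h3 := hj.1
      rw [span] at h2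
      rw [Finset.mem_coe, Finset.mem_Icc]
      beta_reduce
      split_ifs <;> omega
    · intro j hj k hk e
      have hj := Finset.mem_erase.1 (Finset.mem_coe.1 hj)
      have hk := Finset.mem_erase.1 (Finset.mem_coe.1 hk)
      have h1 := hB j hj.2
      have h2 := hB k hk.2
      have h3 := hj.1
      have h4 := hk.1
      simp only at e
      split_ifs at e <;> omega
  rw [Nat.card_Icc] at key
  omega

/-- The estimate for a gap between two attachment sets one of which contains a heavy index. -/
lemma gap_of_heavy {c g i : ℕ} {τ ω : ℕ → ℕ} {A B : Finset ℕ} (hA : ∀ i ∈ A, i < c)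
    (hB : ∀ i ∈ B, i < c) (hω : ∀ i < c, ω i = 2 ∨ ω i = 3 ∧ c + 1 ≤ 2 * τ i ∧ 3 ≤ c)
    (hgap : ∀ i ∈ A, ∀ j ∈ B, i ≠ j → τ i + τ j + 2 + span c i j ≤ g)
    (hi : i ∈ A) (hi3 : ω i = 3) (hne : ∃ j ∈ B, j ≠ i) :
    ∑ i ∈ A, ω i + ∑ i ∈ B, ω i + (4 * c + 8) ≤ 8 * g ∧
      (c + 1) * (∑ i ∈ A, ω i + ∑ i ∈ B, ω i) ≤ 4 * c * g := by
  have hsum : ∀ S : Finset ℕ, (∀ i ∈ S, i < c) → ∑ i ∈ S, ω i ≤ 3 * S.card ∧ S.card ≤ c := by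
    intro S hS
    refine ⟨(Finset.sum_le_card_nsmul _ _ 3 ?_).trans (by simp [Nat.mul_comm]), ?_⟩
    · intro i hi
      have := hω i (hS i hi)
      omega
    · calc S.card ≤ (Finset.range c).card :=
          Finset.card_le_card fun i hi => Finset.mem_range.2 (hS i hi)
        _ = c := Finset.card_range c
  obtain ⟨hA1, hA2⟩ := hsum A hA
  obtain ⟨hB1, hB2⟩ := hsum B hB
  obtain ⟨j, hj, hji, hfar⟩ := exists_far_index (hA i hi) B hB hne
  have h1 := hgap i hi j hj hji.symm
  have h2 := hω i (hA i hi)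
  have h3 : 2 * c + 3 + B.card ≤ 2 * g := by omega
  refine ⟨by omega, ?_⟩
  have h4 : ∑ i ∈ A, ω i + ∑ i ∈ B, ω i ≤ 3 * c + 3 * B.card := by omega
  calc (c + 1) * (∑ i ∈ A, ω i + ∑ i ∈ B, ω i) ≤ (c + 1) * (3 * c + 3 * B.card) :=
        Nat.mul_le_mul_left _ h4
    _ ≤ 2 * c * (2 * c + 3 + B.card) := by nlinarith
    _ ≤ 2 * c * (2 * g) := Nat.mul_le_mul_left _ h3
    _ = 4 * c * g := by ring

lemma gap_of_light {c g : ℕ} {τ ω : ℕ → ℕ} {A B : Finset ℕ} (hA : ∀ i ∈ A, i < c)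
    (hB : ∀ i ∈ B, i < c) (hA2 : ∀ i ∈ A, ω i = 2) (hB2 : ∀ i ∈ B, ω i = 2)
    (hgap : ∀ i ∈ A, ∀ j ∈ B, i ≠ j → τ i + τ j + 2 + span c i j ≤ g)
    (hAB : A.card ≤ B.card) (hne : ∃ i ∈ A, ∃ j ∈ B, j ≠ i) :
    ∑ i ∈ A, ω i + ∑ i ∈ B, ω i + (4 * c + 8) ≤ 8 * g ∧
      (c + 1) * (∑ i ∈ A, ω i + ∑ i ∈ B, ω i) ≤ 4 * c * g := by
  obtain ⟨i, hi, hne⟩ := hne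
  rw [Finset.sum_congr rfl hA2, Finset.sum_congr rfl hB2, Finset.sum_const, Finset.sum_const,
    smul_eq_mul, smul_eq_mul]
  obtain ⟨j, hj, hji, hfar⟩ := exists_far_index (hA i hi) B hB hne
  have h1 := hgap i hi j hj hji.symm
  have hBc : B.card ≤ c := by
    calc B.card ≤ (Finset.range c).card :=
          Finset.card_le_card fun i hi => Finset.mem_range.2 (hB i hi)
        _ = c := Finset.card_range c
  have h3 : c + 2 + B.card ≤ 2 * g := by omega
  refine ⟨by omega, ?_⟩
  calc (c + 1) * (A.card * 2 + B.card * 2) ≤ (c + 1) * (4 * B.card) :=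
        Nat.mul_le_mul_left _ (by omega)
    _ ≤ 2 * c * (c + 2 + B.card) := by nlinarith
    _ ≤ 2 * c * (2 * g) := Nat.mul_le_mul_left _ h3
    _ = 4 * c * g := by ring

/-- The estimate for a gap between two attachment sets that are not the same singleton. -/
lemma gap_of_long {c g : ℕ} {τ ω : ℕ → ℕ} {A B : Finset ℕ} (hA : ∀ i ∈ A, i < c)
    (hB : ∀ i ∈ B, i < c) (hω : ∀ i < c, ω i = 2 ∨ ω i = 3 ∧ c + 1 ≤ 2 * τ i ∧ 3 ≤ c)
    (hgap : ∀ i ∈ A, ∀ j ∈ B, i ≠ j → τ i + τ j + 2 + span c i j ≤ g)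
    (hA0 : A.Nonempty) (hB0 : B.Nonempty) (hAB : ¬ ∃ i, A = {i} ∧ B = {i}) :
    ∑ i ∈ A, ω i + ∑ i ∈ B, ω i + (4 * c + 8) ≤ 8 * g ∧
      (c + 1) * (∑ i ∈ A, ω i + ∑ i ∈ B, ω i) ≤ 4 * c * g := by
  have hgap' : ∀ i ∈ B, ∀ j ∈ A, i ≠ j → τ i + τ j + 2 + span c i j ≤ g := by
    intro i hi j hj hij
    have := hgap j hj i hi hij.symm
    rw [span_comm]; omega
  have hone : ∀ i, (∃ j ∈ B, j ≠ i) ∨ ∃ j ∈ A, j ≠ i := by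
    intro i
    by_contra! hcon
    exact hAB ⟨i, Finset.eq_singleton_iff_nonempty_unique_mem.2 ⟨hA0, hcon.2⟩,
      Finset.eq_singleton_iff_nonempty_unique_mem.2 ⟨hB0, hcon.1⟩⟩
  have hone' : ∃ i ∈ A, ∃ j ∈ B, j ≠ i := by
    obtain ⟨i, hi⟩ := hA0
    obtain ⟨j, hj⟩ := hB0
    rcases hone i with ⟨k, hk, hki⟩ | ⟨k, hk, hki⟩
    · exact ⟨i, hi, k, hk, hki⟩
    · by_cases hij : j = i
      · exact ⟨k, hk, j, hj, hij ▸ hki.symm⟩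
      · exact ⟨i, hi, j, hj, hij⟩
  have heavyA : ∀ i ∈ A, ω i = 3 → (∃ j ∈ B, j ≠ i) →
      ∑ i ∈ A, ω i + ∑ i ∈ B, ω i + (4 * c + 8) ≤ 8 * g ∧
      (c + 1) * (∑ i ∈ A, ω i + ∑ i ∈ B, ω i) ≤ 4 * c * g := fun i hi hi3 hne =>
    gap_of_heavy hA hB hω hgap hi hi3 hne
  have heavyB : ∀ i ∈ B, ω i = 3 → (∃ j ∈ A, j ≠ i) →
      ∑ i ∈ A, ω i + ∑ i ∈ B, ω i + (4 * c + 8) ≤ 8 * g ∧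
      (c + 1) * (∑ i ∈ A, ω i + ∑ i ∈ B, ω i) ≤ 4 * c * g := fun i hi hi3 hne => by
    rw [Nat.add_comm (∑ i ∈ A, ω i)]
    exact gap_of_heavy hB hA hω hgap' hi hi3 hne
  by_cases h3A : ∃ i ∈ A, ω i = 3
  · obtain ⟨i, hi, hi3⟩ := h3A
    by_cases hne : ∃ j ∈ B, j ≠ i
    · exact heavyA i hi hi3 hne
    · refine heavyB i ?_ hi3 ((hone i).resolve_left hne)
      push Not at hne
      obtain ⟨j, hj⟩ := hB0
      exact hne j hj ▸ hj
  by_cases h3B : ∃ i ∈ B, ω i = 3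
  · obtain ⟨i, hi, hi3⟩ := h3B
    by_cases hne : ∃ j ∈ A, j ≠ i
    · exact heavyB i hi hi3 hne
    · refine heavyA i ?_ hi3 ((hone i).resolve_right hne)
      push Not at hne
      obtain ⟨j, hj⟩ := hA0
      exact hne j hj ▸ hj
  push Not at h3A h3B
  have h2A : ∀ i ∈ A, ω i = 2 := fun i hi => (hω i (hA i hi)).resolve_right
    fun h => h3A i hi h.1
  have h2B : ∀ i ∈ B, ω i = 2 := fun i hi => (hω i (hB i hi)).resolve_right
    fun h => h3B i hi h.1
  rcases le_total A.card B.card with hle | hle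
  · exact gap_of_light hA hB h2A h2B hgap hle hone'
  · rw [Nat.add_comm (∑ i ∈ A, ω i)]
    refine gap_of_light hB hA h2B h2A hgap' hle ?_
    obtain ⟨i, hi, j, hj, hij⟩ := hone'
    exact ⟨j, hj, i, hi, hij.symm⟩

/-- Adding up the estimates for consecutive gaps. A gap is `T`-related or earns the bonus `K`. -/
lemma charge_run {w : ℕ → ℕ} {s N α β K : ℕ} {T : ℕ → ℕ → Prop}
    (hT : ∀ p q r, T p q → T q r → T p r)
    (hgap : ∀ p q, s ≤ p → p < q → q ≤ s + N → 0 < w p → 0 < w q →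
      β * (w p + w q) + K ≤ α * (q - p) ∨ β * (w p + w q) ≤ α * (q - p) ∧ T p q)
    (hs : 0 < w s) : ∀ q, s < q → q ≤ s + N → 0 < w q →
      β * (2 * ∑ r ∈ Finset.Ico s q, w r + w q) + K ≤ α * (q - s) + β * w s ∨
      β * (2 * ∑ r ∈ Finset.Ico s q, w r + w q) ≤ α * (q - s) + β * w s ∧ T s q := by
  intro q
  induction q using Nat.strong_induction_on with
  | _ q ih =>
  intro hsq hqN hq
  have hne : ((Finset.Ico s q).filter fun r => 0 < w r).Nonempty :=
    ⟨s, by simp [hsq, hs]⟩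
  obtain ⟨r, hr, hrmax⟩ := Finset.exists_max_image _ id hne
  rw [Finset.mem_filter, Finset.mem_Ico] at hr
  obtain ⟨⟨hsr, hrq⟩, hwr⟩ := hr
  have hzero : ∑ t ∈ Finset.Ico (r + 1) q, w t = 0 := by
    apply Finset.sum_eq_zero
    intro t ht
    rw [Finset.mem_Ico] at ht
    by_contra h0
    have := hrmax t (by simp; omega)
    simp at this
    omega
  have hsum : ∑ t ∈ Finset.Ico s q, w t = ∑ t ∈ Finset.Ico s r, w t + w r := by
    rw [← Finset.sum_Ico_consecutive _ hsr hrq.le, Finset.sum_eq_sum_Ico_succ_bot hrq, hzero,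
      Nat.add_zero]
  have hg := hgap r q hsr hrq hqN hwr hq
  have e1 : β * (2 * ∑ r ∈ Finset.Ico s q, w r + w q) =
      β * (2 * ∑ t ∈ Finset.Ico s r, w t + w r) + β * (w r + w q) := by rw [hsum]; ring
  have e2 : α * (q - s) = α * (q - r) + α * (r - s) := by
    rw [← Nat.mul_add]; congr 1; omega
  rcases hsr.eq_or_lt with rfl | hsr'
  · rw [e1, e2]
    simp only [Finset.Ico_self, Finset.sum_empty, Nat.mul_zero, Nat.zero_add, Nat.sub_self]
    rcases hg with hg | ⟨hg, hTg⟩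
    · left; omega
    · right; exact ⟨by omega, hTg⟩
  · rw [e1, e2]
    rcases ih r hrq hsr' (by omega) hwr with h | ⟨h, hTh⟩
    · left; rcases hg with hg | ⟨hg, -⟩ <;> omega
    · rcases hg with hg | ⟨hg, hTg⟩
      · left; omega
      · right; exact ⟨by omega, hT _ _ _ hTh hTg⟩

end LongCycle

namespace LongCycle

variable {G : SimpleGraph V} {a b : V} {P Q : List V}

open Classical in
/-- The indices attached to the position `p` of the cycle. -/
noncomputable def attSet (G : SimpleGraph V) (f : ℕ → V) (c : ℕ) (E : ℕ → V) (p : ℕ) : Finset ℕ :=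
  (Finset.range c).filter fun i => G.Adj (E i) (f p)

lemma mem_attSet {f : ℕ → V} {c : ℕ} {E : ℕ → V} {p i : ℕ} :
    i ∈ attSet G f c E p ↔ i < c ∧ G.Adj (E i) (f p) := by simp [attSet]

/-- The total weight attached to the position `p` of the cycle. -/
noncomputable def attWeight (G : SimpleGraph V) (f : ℕ → V) (c : ℕ) (E : ℕ → V) (ω : ℕ → ℕ)
    (p : ℕ) : ℕ := ∑ i ∈ attSet G f c E p, ω i

lemma sum_attWeight (f : ℕ → V) (N c : ℕ) (E : ℕ → V) (ω : ℕ → ℕ) :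
    ∑ p ∈ Finset.range N, attWeight G f c E ω p =
      ∑ i ∈ Finset.range c, ω i * (attach G f N (E i)).card := by
  simp only [attWeight]
  rw [Finset.sum_comm' (t' := Finset.range c) (s' := fun i => attach G f N (E i))]
  · refine Finset.sum_congr rfl fun i _ => ?_
    rw [Finset.sum_const, smul_eq_mul, Nat.mul_comm]
  · intro p i
    simp only [Finset.mem_range, mem_attSet, mem_attach]
    tauto

namespace Charging

variable {f : ℕ → V} {N c : ℕ} {E : ℕ → V} {τ ω : ℕ → ℕ}

lemma attWeight_pos (h : Charging G f c E τ ω) {p : ℕ} :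
    0 < attWeight G f c E ω p ↔ (attSet G f c E p).Nonempty := by
  rw [attWeight, Finset.sum_pos_iff]
  constructor
  · rintro ⟨i, hi, -⟩; exact ⟨i, hi⟩
  · rintro ⟨i, hi⟩
    have := h.weight i (mem_attSet.1 hi).1
    exact ⟨i, hi, by omega⟩

lemma gap_ne (hC : MaxCycle G Set.univ N f) (h : Charging G f c E τ ω) {p q i j : ℕ}
    (hpq : p < q) (hq : q ≤ p + N) (hi : i ∈ attSet G f c E p) (hj : j ∈ attSet G f c E q)
    (hij : i ≠ j) : τ i + τ j + 2 + span c i j ≤ q - p := by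
  rw [mem_attSet] at hi hj
  have key : ∀ P, PathList G (E i) P (E j) → (∀ x ∈ P, x ∉ Set.range f) → P.length + 1 ≤ q - p := by
    intro P hP hPf
    refine hC.insert_le (p := p) (by omega) (by omega) hP (fun _ _ => Set.mem_univ _) hPf
      hi.2.symm ?_
    rw [show p + (q - p) = q by omega]
    exact hj.2
  rcases lt_or_gt_of_ne hij with hlt | hlt
  · obtain ⟨P, hP, hPf, h1, h2⟩ := h.link i hi.1 j hj.1 hlt
    have := key P hP hPf
    rw [span]; omega
  · obtain ⟨P, hP, hPf, h1, h2⟩ := h.link j hj.1 i hi.1 hlt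
    have := key _ hP.reverse (by simpa using hPf)
    rw [List.length_reverse] at this
    rw [span]; omega

lemma gap (hC : MaxCycle G Set.univ N f) (h : Charging G f c E τ ω) {p q : ℕ}
    (hpq : p < q) (hq : q ≤ p + N) (hwp : 0 < attWeight G f c E ω p)
    (hwq : 0 < attWeight G f c E ω q) :
    (attWeight G f c E ω p + attWeight G f c E ω q + (4 * c + 8) ≤ 8 * (q - p) ∨
      attWeight G f c E ω p + attWeight G f c E ω q ≤ 8 * (q - p) ∧
        ∃ i, attSet G f c E p = {i} ∧ attSet G f c E q = {i}) ∧
    (c + 1) * (attWeight G f c E ω p + attWeight G f c E ω q) ≤ 4 * c * (q - p) := by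
  rw [h.attWeight_pos] at hwp hwq
  by_cases hs : ∃ i, attSet G f c E p = {i} ∧ attSet G f c E q = {i}
  · obtain ⟨i, hip, hiq⟩ := hs
    have hi := mem_attSet.1 (hip ▸ Finset.mem_singleton_self i : i ∈ attSet G f c E p)
    have hi' := mem_attSet.1 (hiq ▸ Finset.mem_singleton_self i : i ∈ attSet G f c E q)
    have h1 := hC.insert_le (p := p) (k := q - p) (by omega) (by omega) (PathList.single (E i))
      (fun _ _ => Set.mem_univ _) (by simpa using h.off i hi.1) hi.2.symm
      (by rw [show p + (q - p) = q by omega]; exact hi'.2)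
    simp only [List.length_singleton] at h1
    have hw := h.weight i hi.1
    simp only [attWeight, hip, hiq, Finset.sum_singleton]
    refine ⟨Or.inr ⟨by omega, i, rfl, rfl⟩, ?_⟩
    calc (c + 1) * (ω i + ω i) ≤ 4 * c * 2 := by
          rcases hw with hw | ⟨hw, -, hc⟩ <;> rw [hw] <;> omega
      _ ≤ 4 * c * (q - p) := Nat.mul_le_mul_left _ (by omega)
  · obtain ⟨h1, h2⟩ := gap_of_long (g := q - p) (fun i hi => (mem_attSet.1 hi).1)
      (fun i hi => (mem_attSet.1 hi).1) h.weight
      (fun i hi j hj hij => h.gap_ne hC hpq hq hi hj hij) hwp hwq hs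
    exact ⟨Or.inl h1, h2⟩

lemma attWeight_per (hC : MaxCycle G Set.univ N f) (p : ℕ) :
    attWeight G f c E ω (p + N) = attWeight G f c E ω p := by
  have : attSet G f c E (p + N) = attSet G f c E p := by
    ext i; rw [mem_attSet, mem_attSet, hC.per]
  rw [attWeight, this, attWeight]

/-- The cycle is long compared with the weight attached to it. -/
lemma mul_sum_attWeight_le (hC : MaxCycle G Set.univ N f) (h : Charging G f c E τ ω) :
    2 * (c + 1) * ∑ p ∈ Finset.range N, attWeight G f c E ω p ≤ 4 * c * N := by
  by_cases h0 : ∀ p ∈ Finset.range N, attWeight G f c E ω p = 0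
  · rw [Finset.sum_eq_zero h0]; simp
  push Not at h0
  obtain ⟨s, hs, hws⟩ := h0
  have hws : 0 < attWeight G f c E ω s := Nat.pos_of_ne_zero hws
  have h1 := charge_run (w := attWeight G f c E ω) (s := s) (N := N) (α := 4 * c) (β := c + 1)
    (K := 0) (T := fun _ _ => True) (fun _ _ _ _ _ => trivial)
    (fun p q hp hpq hq hwp hwq => Or.inl (h.gap hC hpq (by omega) hwp hwq).2) hws (s + N)
    (by have := hC.pos; omega) le_rfl (by rw [attWeight_per hC]; exact hws)
  have h2 : (c + 1) * (2 * ∑ r ∈ Finset.Ico s (s + N), attWeight G f c E ω r +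
      attWeight G f c E ω (s + N)) ≤ 4 * c * (s + N - s) + (c + 1) * attWeight G f c E ω s := by
    rcases h1 with h1 | h1
    · exact h1
    · exact h1.1
  rw [attWeight_per hC, Nat.add_sub_cancel_left, Nat.mul_add] at h2
  have h3 : ∑ r ∈ Finset.Ico s (s + N), attWeight G f c E ω r =
      ∑ p ∈ Finset.range N, attWeight G f c E ω p := by
    rw [Finset.sum_Ico_eq_sum_range, Nat.add_sub_cancel_left]
    exact sum_range_add_of_periodic _ (attWeight_per hC) s
  rw [h3] at h2
  calc 2 * (c + 1) * ∑ p ∈ Finset.range N, attWeight G f c E ω p =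
        (c + 1) * (2 * ∑ p ∈ Finset.range N, attWeight G f c E ω p) := by ring
    _ ≤ 4 * c * N := by omega

/-- A stretch of the cycle between positions matched to different indices earns a bonus. -/
lemma segment (hC : MaxCycle G Set.univ N f) (h : Charging G f c E τ ω) {p q i j : ℕ}
    (hpq : p < q) (hq : q ≤ p + N) (hi : i ∈ attSet G f c E p) (hj : j ∈ attSet G f c E q)
    (hij : i ≠ j) :
    2 * ∑ r ∈ Finset.Ico p q, attWeight G f c E ω r + attWeight G f c E ω q + (4 * c + 8) ≤
      8 * (q - p) + attWeight G f c E ω p := by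
  have h1 := charge_run (w := attWeight G f c E ω) (s := p) (N := N) (α := 8) (β := 1)
    (K := 4 * c + 8) (T := fun p q => ∃ i, attSet G f c E p = {i} ∧ attSet G f c E q = {i})
    (by
      rintro p q r ⟨i, hi, hi'⟩ ⟨j, hj, hj'⟩
      have : i = j := by rw [hi'] at hj; exact Finset.singleton_inj.1 hj
      exact ⟨i, hi, this ▸ hj'⟩)
    (fun p q hp hpq hq hwp hwq => by
      rw [Nat.one_mul]; exact (h.gap hC hpq (by omega) hwp hwq).1)
    (h.attWeight_pos.2 ⟨i, hi⟩) q hpq hq (h.attWeight_pos.2 ⟨j, hj⟩)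
  rw [Nat.one_mul, Nat.one_mul] at h1
  rcases h1 with h1 | ⟨-, k, hk, hk'⟩
  · omega
  · rw [hk] at hi; rw [hk'] at hj
    exact absurd ((Finset.mem_singleton.1 hi).trans (Finset.mem_singleton.1 hj).symm) hij

/-- A matching of `m` indices into the cycle makes the cycle longer. -/
lemma sum_attWeight_add_le (hC : MaxCycle G Set.univ N f) (h : Charging G f c E τ ω) {m : ℕ}
    (hm : 2 ≤ m) (idx pos : Fin m → ℕ) (hidx : Function.Injective idx)
    (hpos : Function.Injective pos) (hlt : ∀ k, pos k < N)
    (hatt : ∀ k, idx k ∈ attSet G f c E (pos k)) :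
    2 * ∑ p ∈ Finset.range N, attWeight G f c E ω p + m * (4 * c + 8) ≤ 8 * N := by
  obtain ⟨p, σ, hp, hpm, hpσ, hσ⟩ := exists_periodic_enum (by omega) pos hpos hlt
  have hatt' : ∀ k, idx (σ k) ∈ attSet G f c E (p k) := by
    intro k
    have := hatt (σ k)
    rw [mem_attSet] at this ⊢
    rwa [← hpσ, hC.map_mod] at this
  have key : ∀ k, 2 * ∑ r ∈ Finset.Ico (p 0) (p k), attWeight G f c E ω r +
      attWeight G f c E ω (p k) + k * (4 * c + 8) ≤
      8 * (p k - p 0) + attWeight G f c E ω (p 0) := by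
    intro k
    induction k with
    | zero => simp
    | succ k ih =>
      have h1 := h.segment hC (hp (Nat.lt_add_one k))
        (by rw [← hpm]; exact hp.monotone (by omega)) (hatt' k) (hatt' (k + 1))
        (fun e => hσ k (k + 1) (by omega) (by omega) (hidx e))
      have h2 : p 0 ≤ p k := hp.monotone (Nat.zero_le k)
      have h3 : p k < p (k + 1) := hp (Nat.lt_succ_self k)
      rw [← Finset.sum_Ico_consecutive _ h2 h3.le, Nat.add_one_mul k]
      omega
  have h1 := key m
  have h2 : p m = p 0 + N := by simpa using hpm 0
  have h3 : ∑ r ∈ Finset.Ico (p 0) (p 0 + N), attWeight G f c E ω r =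
      ∑ p ∈ Finset.range N, attWeight G f c E ω p := by
    rw [Finset.sum_Ico_eq_sum_range, Nat.add_sub_cancel_left]
    exact sum_range_add_of_periodic _ (attWeight_per hC) (p 0)
  rw [h2, attWeight_per hC, h3, Nat.add_sub_cancel_left] at h1
  omega

end Charging

end LongCycle

namespace LongCycle

variable {G : SimpleGraph V} {a b : V} {P Q : List V}

lemma kConnected_mono [Fintype V] {k m : ℕ} (hG : KConnected G k) (hmk : m ≤ k) :
    KConnected G m :=
  ⟨hmk.trans_lt hG.1, fun S hS => hG.2 S (hS.trans_le hmk)⟩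

lemma MaxCycle.length_le {X Y : Set V} {N c : ℕ} {f u : ℕ → V} (hC : MaxCycle G X N f)
    (hQ : MaxCycle G Y c u) (hYX : Y ⊆ X) : c ≤ N := by
  have hc := hQ.pos
  have h1 := hQ.arc_pathList (s := 0) (len := c) (e := c - 1) hc le_rfl (by omega)
  have h2 := hC.max (arc u 0 c) ⟨_, _, h1, fun h => by
    rw [length_arc] at h
    have := hQ.adj h (c - 1)
    rwa [show c - 1 + 1 = 0 + c by omega, hQ.per] at this⟩ (by
      intro x hx
      obtain ⟨q, rfl⟩ := mem_range_of_mem_arc hx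
      exact hYX (hQ.mem q))
  simpa using h2

/-- Two vertices of a cycle are joined by an arc with at least half of the vertices. -/
lemma MaxCycle.exists_long_arc {X : Set V} {c m : ℕ} {u : ℕ → V} (hQ : MaxCycle G X c u)
    (hm : 2 * m ≤ c + 2) {x y : V} (hx : x ∈ Set.range u) (hy : y ∈ Set.range u) (hxy : x ≠ y) :
    ∃ P, PathList G x P y ∧ (∀ z ∈ P, z ∈ Set.range u) ∧ m ≤ P.length := by
  obtain ⟨i, rfl⟩ := hx
  obtain ⟨j, rfl⟩ := hy
  obtain ⟨k, hk1, hk2, hk⟩ := hQ.exists_pos i j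
  have hik : i ≠ k := by rintro rfl; exact hxy hk
  rw [← hk]
  by_cases hlen : m ≤ k - i + 1
  · exact ⟨_, hQ.arc_pathList (s := i) (len := k - i + 1) (by omega) (by omega) (by omega),
      fun z hz => mem_range_of_mem_arc hz, by simpa using hlen⟩
  · have h1 := (hQ.arc_pathList (s := k) (len := c - (k - i) + 1) (e := i + c) (by omega)
      (by omega) (by omega)).reverse
    rw [hQ.per] at h1
    refine ⟨_, h1, fun z hz => mem_range_of_mem_arc (List.mem_reverse.1 hz), ?_⟩
    rw [List.length_reverse, length_arc]
    omega

lemma card_add_le [Fintype V] {N c : ℕ} {f u : ℕ → V} (hC : MaxCycle G Set.univ N f)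
    (hQ : MaxCycle G (Set.range f)ᶜ c u) : N + c ≤ Fintype.card V := by
  classical
  have hd : Disjoint (cycleVerts f N) (cycleVerts u c) := by
    rw [Finset.disjoint_left]
    intro x hx hx'
    obtain ⟨q, rfl⟩ := hQ.mem_cycleVerts.1 hx'
    exact hQ.mem q (hC.mem_cycleVerts.1 hx)
  have := Finset.card_le_univ (cycleVerts f N ∪ cycleVerts u c)
  rwa [Finset.card_union_of_disjoint hd, hC.card_cycleVerts, hQ.card_cycleVerts] at this

/-- First edges of disjoint paths from one cycle to another. -/
lemma exists_first_edges [Fintype V] {l N c : ℕ} {f u : ℕ → V} (hG : KConnected G l)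
    (hC : MaxCycle G Set.univ N f) (hQ : MaxCycle G (Set.range f)ᶜ c u) (hlN : l ≤ N)
    (hlc : l ≤ c) : ∃ (idx : Fin l → ℕ) (y : Fin l → V), Function.Injective idx ∧
      Function.Injective y ∧ (∀ k, idx k < c) ∧ (∀ k, G.Adj (u (idx k)) (y k)) ∧
      ∀ k, y k ∉ Set.range u := by
  obtain ⟨s, e, R, hR, hs, he, hRm, hRd⟩ := exists_linkage hG (A := cycleVerts u c)
    (B := cycleVerts f N) (by rwa [hQ.card_cycleVerts]) (by rwa [hC.card_cycleVerts])
  have hse : ∀ k, s k ≠ e k := by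
    intro k h
    obtain ⟨q, hq⟩ := hQ.mem_cycleVerts.1 (hs k)
    exact hQ.mem q (hq ▸ h ▸ hC.mem_cycleVerts.1 (he k))
  have hex : ∀ k, ∃ y, ∃ W, R k = s k :: y :: W := by
    intro k
    obtain ⟨W, l, hW, -, -⟩ := (hR k).exists_eq_cons_concat (hse k)
    rcases W with _ | ⟨z, W⟩
    · exact ⟨e k, [], by simpa using hW⟩
    · exact ⟨z, W ++ [e k], by simpa using hW⟩
  choose y W hW using hex
  have hidx : ∀ k, ∃ i < c, u i = s k := by
    intro k
    obtain ⟨q, hq⟩ := hQ.mem_cycleVerts.1 (hs k)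
    exact ⟨q % c, Nat.mod_lt _ hQ.pos, by rw [hQ.map_mod, hq]⟩
  choose idx hidxc hidxs using hidx
  have hsR : ∀ k, s k ∈ R k := fun k => (hR k).head_mem
  have hyR : ∀ k, y k ∈ R k := fun k => by rw [hW]; simp
  refine ⟨idx, y, ?_, ?_, hidxc, ?_, ?_⟩
  · intro k k' h
    by_contra hne
    refine hRd k k' hne _ (hsR k) ?_
    rw [← hidxs, h, hidxs]; exact hsR k'
  · intro k k' h
    by_contra hne
    exact hRd k k' hne _ (hyR k) (h ▸ hyR k')
  · intro k
    rw [hidxs]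
    have := (hR k).2.1
    rw [hW] at this
    exact (List.isChain_cons_cons.1 this).1
  · intro k hk
    have h1 := (hRm k _ (hyR k)).1 (hQ.mem_cycleVerts.2 hk)
    have h2 := (hR k).1
    rw [hW, h1] at h2
    simp at h2

/-- Sets that are large or distinct singletons have distinct representatives. -/
lemma exists_distinct_representatives {l M : ℕ} (hM : l ≤ M) (t : Fin l → Finset ℕ)
    {α : Type*} (y : Fin l → α) (hy : Function.Injective y) (f : ℕ → α)
    (ht : ∀ k, (∃ p, p ∈ t k ∧ f p = y k) ∨ M ≤ (t k).card) :
    ∃ pos : Fin l → ℕ, Function.Injective pos ∧ ∀ k, pos k ∈ t k := by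
  classical
  apply (Finset.all_card_le_biUnion_card_iff_exists_injective t).1
  intro s
  by_cases hs : ∃ k ∈ s, M ≤ (t k).card
  · obtain ⟨k, hk, hkM⟩ := hs
    calc s.card ≤ l := (Finset.card_le_univ s).trans (by simp)
      _ ≤ (t k).card := hM.trans hkM
      _ ≤ _ := Finset.card_le_card (Finset.subset_biUnion_of_mem t hk)
  · push Not at hs
    have hp : ∀ k, ∃ p, k ∈ s → p ∈ t k ∧ f p = y k := by
      intro k
      by_cases hk : k ∈ s
      · obtain ⟨p, hp⟩ := (ht k).resolve_right (not_le.2 (hs k hk))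
        exact ⟨p, fun _ => hp⟩
      · exact ⟨0, fun h => absurd h hk⟩
    choose p hp using hp
    apply Finset.card_le_card_of_injOn p
    · intro k hk
      exact Finset.mem_biUnion.2 ⟨k, hk, (hp k hk).1⟩
    · intro k hk k' hk' h
      apply hy
      rw [← (hp k hk).2, h, (hp k' hk').2]

set_option maxHeartbeats 1000000 in
/-- The longest cycle outside of a longest cycle is short. -/
theorem length_lt_of_off_cycle [Fintype V] {l δ N c : ℕ} {f u : ℕ → V} (hl : 1 ≤ l)
    (hG : KConnected G l) (hdeg : ∀ v, δ ≤ (nbrs G v).card)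
    (hn : Fintype.card V + l * (l - 1) ≤ (l + 1) * δ) (hC : MaxCycle G Set.univ N f)
    (hQ : MaxCycle G (Set.range f)ᶜ c u) : c < min l (δ - l + 1) := by
  by_contra hcon
  have hV := hG.1
  obtain ⟨k, rfl⟩ : ∃ k, l = k + 1 := ⟨l - 1, by omega⟩
  rw [Nat.add_sub_cancel] at hn
  have hδl : k + 1 ≤ δ := by
    by_contra hlt
    have : (k + 1 + 1) * δ ≤ (k + 1 + 1) * k := Nat.mul_le_mul_left _ (by omega)
    nlinarith
  obtain ⟨D, hD⟩ : ∃ D, δ = k + 1 + D := ⟨δ - (k + 1), by omega⟩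
  have hmin : min (k + 1) (D + 1) ≤ c := by
    rw [hD] at hcon
    omega
  have hnn : Fintype.card V + 1 ≤ (k + 1) * (D + 1) + (k + 1) + (D + 1) := by
    rw [hD] at hn
    nlinarith
  obtain ⟨μ, M, hμ1, hμM, hμk, hkM, hδ, hμc, hnμ⟩ : ∃ μ M, 1 ≤ μ ∧ μ ≤ M ∧ μ ≤ k + 1 ∧ k + 1 ≤ M ∧
      δ + 1 = M + μ ∧ μ ≤ c ∧ Fintype.card V + 1 ≤ μ * M + μ + M := by
    rcases le_total k D with h | h
    · exact ⟨k + 1, D + 1, by omega, by omega, by omega, by omega, by omega, by omega, hnn⟩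
    · refine ⟨D + 1, k + 1, by omega, by omega, by omega, by omega, by omega, by omega, ?_⟩
      rw [Nat.mul_comm]; omega
  have hcN : c ≤ N := hC.length_le hQ (Set.subset_univ _)
  have hNc := card_add_le hC hQ
  have hF : ∀ R : Finset V, (∀ x ∈ R, x ∈ (Set.range f)ᶜ) → μ + 1 ≤ R.card →
      (∀ x ∈ R, ∀ y ∈ R, x ≠ y →
        ∃ P, PathList G x P y ∧ (∀ z ∈ P, z ∈ R) ∧ μ ≤ P.length) → False := by
    intro R hR hRc hlink
    refine not_wellLinked_off_cycle (kConnected_mono hG hμk) hμ1 hdeg ?_ hC (hμc.trans hcN) R hR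
      hRc hlink
    obtain ⟨m, rfl⟩ : ∃ m, μ = m + 1 := ⟨μ - 1, by omega⟩
    obtain rfl : δ = M + m := by omega
    rw [Nat.add_sub_cancel]
    nlinarith
  by_cases hbig : μ + 1 ≤ c ∧ 2 * μ ≤ c + 2
  · refine hF (cycleVerts u c) ?_ (by rw [hQ.card_cycleVerts]; exact hbig.1) ?_
    · intro x hx
      obtain ⟨q, rfl⟩ := hQ.mem_cycleVerts.1 hx
      exact hQ.mem q
    · intro x hx y hy hxy
      obtain ⟨P, hP, hPu, hPl⟩ := hQ.exists_long_arc hbig.2 (hQ.mem_cycleVerts.1 hx)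
        (hQ.mem_cycleVerts.1 hy) hxy
      exact ⟨P, hP, fun z hz => hQ.mem_cycleVerts.2 (hPu z hz), hPl⟩
  have hcases : c + 3 ≤ 2 * μ ∨ c = μ := by omega
  obtain ⟨a, ha⟩ : ∃ a, a + c = M + μ := ⟨M + μ - c, by omega⟩
  have haδ : δ + 1 - c = a := by omega
  by_cases hcM : c ≤ M
  · obtain ⟨E, τ, ω, hE, hsum, -⟩ := exists_charging hC hQ hdeg hμ1 hμM hδ hμc hcases hF ∅
      (fun _ => f 0) (by simp) (by simp) (by simp) (by simp)
    have h1 := hE.mul_sum_attWeight_le hC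
    rw [sum_attWeight] at h1
    rw [haδ] at hsum
    have h2 : 2 * (c + 1) * (2 * c * a) ≤ 4 * c * N :=
      (Nat.mul_le_mul_left _ hsum).trans h1
    have h3 : (c + 1) * a ≤ N := by
      have : 4 * c * ((c + 1) * a) ≤ 4 * c * N := by
        calc 4 * c * ((c + 1) * a) = 2 * (c + 1) * (2 * c * a) := by ring
          _ ≤ _ := h2
      exact Nat.le_of_mul_le_mul_left this (by omega)
    obtain ⟨d, rfl⟩ : ∃ d, c = μ + d := ⟨c - μ, by omega⟩
    obtain ⟨d', rfl⟩ : ∃ d', M = μ + d + d' := ⟨M - (μ + d), by omega⟩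
    obtain rfl : a = μ + d' := by omega
    nlinarith [Nat.zero_le (d * d')]
  · have hck : k + 1 ≤ c := by omega
    obtain ⟨idx, y, hidx, hy, hidxc, hadj, hyu⟩ := exists_first_edges hG hC hQ (by omega) hck
    have hext : ∀ k, Function.extend idx y (fun _ => f 0) (idx k) = y k := fun k =>
      hidx.extend_apply _ _ k
    obtain ⟨E, τ, ω, hE, hsum, hmat⟩ := exists_charging hC hQ hdeg hμ1 hμM hδ hμc hcases hF
      (Finset.univ.image idx) (Function.extend idx y fun _ => f 0)
      (by simpa using hidxc) (by simpa [hext] using hadj) (by simpa [hext] using hyu)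
      (by
        intro i hi j hj h
        obtain ⟨i, -, rfl⟩ := Finset.mem_image.1 hi
        obtain ⟨j, -, rfl⟩ := Finset.mem_image.1 hj
        rw [hext, hext] at h
        rw [hy h])
    obtain ⟨pos, hpos, hposm⟩ := exists_distinct_representatives hkM
      (fun k => attach G f N (E (idx k))) y hy f (by
        intro k
        have := hmat (idx k) (by simp)
        rw [hext] at this
        rcases this with ⟨⟨p, hp⟩, h2⟩ | h2
        · left
          exact ⟨p % N, mem_attach.2 ⟨Nat.mod_lt _ hC.pos, by rwa [hC.map_mod, hp]⟩,
            by rw [hC.map_mod, hp]⟩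
        · exact Or.inr h2)
    have h1 := hE.sum_attWeight_add_le hC (by omega) idx pos hidx hpos
      (fun k => (mem_attach.1 (hposm k)).1)
      (fun k => mem_attSet.2 ⟨hidxc k, (mem_attach.1 (hposm k)).2⟩)
    rw [sum_attWeight] at h1
    rw [haδ] at hsum
    obtain ⟨d, rfl⟩ : ∃ d, c = D + 1 + d := ⟨c - (D + 1), by omega⟩
    obtain ⟨e, he⟩ : ∃ e, 2 * k = D + d + e := ⟨2 * k - (D + d), by omega⟩
    have h2 : a + d = k + 1 := by omega
    nlinarith [Nat.zero_le (d * e)]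

end LongCycle

namespace LongCycle

variable {G : SimpleGraph V}

lemma GenCycle.length_pos {L : List V} (hL : GenCycle G L) : 0 < L.length := by
  obtain ⟨a, b, h, -⟩ := hL
  exact h.length_pos

/-- The periodic enumeration of the vertices of a longest generalized cycle. -/
lemma GenCycle.exists_maxCycle {X : Set V} {L : List V} (hL : GenCycle G L) (hX : ∀ x ∈ L, x ∈ X)
    (hmax : ∀ M, GenCycle G M → (∀ x ∈ M, x ∈ X) → M.length ≤ L.length) :
    ∃ f : ℕ → V, MaxCycle G X L.length f ∧ Set.range f = {x | x ∈ L} := by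
  have hpos := hL.length_pos
  obtain ⟨a, b, ⟨hnd, hch, ha, hb⟩, hab⟩ := hL
  have hlt : ∀ p, p % L.length < L.length := fun p => Nat.mod_lt _ hpos
  refine ⟨fun p => L[p % L.length]'(hlt p), ⟨hpos, fun p => ?_, fun p q hp hq h => ?_,
    fun h2 p => ?_, fun p => hX _ (List.getElem_mem _), hmax⟩, ?_⟩
  · simp
  · simpa [Nat.mod_eq_of_lt hp, Nat.mod_eq_of_lt hq] using (hnd.getElem_inj_iff).1 h
  · have hp := hlt p
    by_cases hlast : p % L.length + 1 < L.length
    · have hmod : (p + 1) % L.length = p % L.length + 1 := by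
        rw [Nat.add_mod, Nat.mod_eq_of_lt (show 1 < L.length by omega), Nat.mod_eq_of_lt hlast]
      simp only [hmod]
      exact (List.isChain_iff_getElem.1 hch) _ hlast
    · have hmod : (p + 1) % L.length = 0 := by
        rw [Nat.add_mod, Nat.mod_eq_of_lt (show 1 < L.length by omega),
          show p % L.length + 1 = L.length by omega, Nat.mod_self]
      have hpl : p % L.length = L.length - 1 := by omega
      simp only [hmod, hpl]
      have h0 : L[0] = a := by
        rw [List.head?_eq_getElem?, List.getElem?_eq_getElem hpos] at ha
        exact Option.some.inj ha
      have h1 : L[L.length - 1] = b := by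
        rw [List.getLast?_eq_getElem?, List.getElem?_eq_getElem (by omega)] at hb
        exact Option.some.inj hb
      rw [h0, h1]
      exact hab h2
  · ext x
    simp only [Set.mem_range, Set.mem_ofPred_eq]
    constructor
    · rintro ⟨p, rfl⟩
      exact List.getElem_mem _
    · intro hx
      obtain ⟨i, hi, rfl⟩ := List.getElem_of_mem hx
      exact ⟨i, by simp [Nat.mod_eq_of_lt hi]⟩

lemma genCycle_of_isCycle {v : V} {w : G.Walk v v} (hw : w.IsCycle) :
    GenCycle G w.support.tail ∧ w.support.tail.length = w.length := by
  cases w with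
  | nil => exact absurd hw Walk.not_isCycle_nil
  | @cons _ x _ h p =>
    have hp := ((Walk.cons_isCycle_iff _ _).1 hw).1
    refine ⟨⟨x, v, ⟨by simpa using hp.support_nodup, by simpa using p.isChain_adj_support, ?_, ?_⟩,
      fun _ => h⟩, by simp⟩
    · simp [List.head?_eq_some_head]
    · simp [List.getLast?_eq_some_getLast]

lemma GenCycle.exists_isCycle {L : List V} (hL : GenCycle G L) (h3 : 3 ≤ L.length) :
    ∃ (v : V) (w : G.Walk v v), w.IsCycle ∧ w.length = L.length := by
  obtain ⟨a, b, ⟨hnd, hch, ha, hb⟩, hab⟩ := hL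
  have hne : L ≠ [] := by rintro rfl; simp at h3
  have ha' : L.head hne = a := by
    rw [List.head?_eq_some_head hne] at ha; exact Option.some.inj ha
  have hb' : L.getLast hne = b := by
    rw [List.getLast?_eq_some_getLast hne] at hb; exact Option.some.inj hb
  have hadj : G.Adj (L.getLast hne) (L.head hne) := by
    rw [ha', hb']; exact hab (by omega)
  have hpath : (Walk.ofSupport L hne hch).IsPath := by
    rw [Walk.isPath_def, Walk.support_ofSupport]; exact hnd
  refine ⟨_, Walk.cons hadj (Walk.ofSupport L hne hch), ?_, ?_⟩
  · rw [Walk.isCycle_iff_isPath_tail_and_le_length]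
    refine ⟨by simpa using hpath, ?_⟩
    simp; omega
  · simp; omega

lemma kConnected_of_le_connectivity [Fintype V] {l : ℕ} (hl : 1 ≤ l) (h : l ≤ connectivity G) :
    KConnected G l := by
  have hne : {k | KConnected G k}.Nonempty := by
    by_contra hempty
    rw [Set.not_nonempty_iff_eq_empty] at hempty
    rw [connectivity, hempty, csSup_empty] at h
    simp at h; omega
  have hmem := Nat.sSup_mem hne ⟨Fintype.card V, fun k hk => hk.1.le⟩
  exact kConnected_mono hmem h

lemma exists_genCycle_of_extCycle {W : Set V} {n : ℕ} (h : ExtCycle G W n) :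
    ∃ L, GenCycle G L ∧ L.length = n ∧ ∀ x ∈ L, x ∈ W := by
  rcases h with ⟨rfl, v, rfl⟩ | ⟨rfl, u, v, huv, rfl⟩ | ⟨-, v, w, hw, rfl, rfl⟩
  · exact ⟨[v], ⟨v, v, by simp [PathList], by simp⟩, by simp, by simp⟩
  · exact ⟨[u, v], ⟨u, v, by simp [PathList, huv, huv.ne], fun _ => huv.symm⟩, by simp, by simp⟩
  · obtain ⟨h1, h2⟩ := genCycle_of_isCycle hw
    exact ⟨_, h1, h2, fun x hx => List.mem_of_mem_tail hx⟩

end LongCycle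

theorem nikoghosyan_2009_CD (G : SimpleGraph V) [Fintype V] [DecidableRel G.Adj]
    (l : ℕ) (hl : 1 ≤ l) (hκ : l ≤ connectivity G)
    (hδ : (G.minDegree : ℝ) ≥ (Fintype.card V + 2 : ℝ) / (l + 1) + l - 2) :
    ∀ (v : V) (w : G.Walk v v), IsLongestCycle w →
      IsCDCycle G w (min l (G.minDegree - l + 1)) := by
  intro v w hw
  refine ⟨hw.1, fun W n hW hn => ?_⟩
  by_contra! hdisj
  have hn' : Fintype.card V + l * (l - 1) ≤ (l + 1) * G.minDegree := by
    obtain ⟨k, rfl⟩ : ∃ k, l = k + 1 := ⟨l - 1, by omega⟩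
    rw [Nat.add_sub_cancel]
    have hpos : (0 : ℝ) < ((k + 1 : ℕ) : ℝ) + 1 := by positivity
    have h : (Fintype.card V + 2 : ℝ) / (((k + 1 : ℕ) : ℝ) + 1)
        ≤ G.minDegree - ((k + 1 : ℕ) : ℝ) + 2 := by linarith
    rw [div_le_iff₀ hpos] at h
    have : ((Fintype.card V + (k + 1) * k : ℕ) : ℝ) ≤ ((k + 1 + 1) * G.minDegree : ℕ) := by
      push_cast at h ⊢
      linarith
    exact_mod_cast this
  have hdeg : ∀ x, G.minDegree ≤ (LongCycle.nbrs G x).card := fun x => by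
    refine (G.minDegree_le_degree x).trans_eq ?_
    rw [← G.card_neighborFinset_eq_degree]
    congr 1
    ext y
    simp
  obtain ⟨hgen, hlen⟩ := LongCycle.genCycle_of_isCycle hw.1
  obtain ⟨f, hC, hf⟩ := hgen.exists_maxCycle (X := Set.univ) (by simp) fun M hM _ => by
    rcases le_or_gt 3 M.length with h3 | h3
    · obtain ⟨x, w', hw', h⟩ := hM.exists_isCycle h3
      rw [hlen, ← h]
      exact hw.2 x w' hw'
    · have := hw.1.three_le_length
      omega
  obtain ⟨L, hL, rfl, hLW⟩ := LongCycle.exists_genCycle_of_extCycle hW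
  have hLX : ∀ x ∈ L, x ∈ (Set.range f)ᶜ := fun x hx hxf => by
    rw [hf] at hxf
    exact hdisj x (hLW x hx) (List.mem_of_mem_tail hxf)
  obtain ⟨M, ⟨hM, hMX⟩, hmax⟩ := LongCycle.exists_forall_le_of_bounded
    (fun M => LongCycle.GenCycle G M ∧ ∀ x ∈ M, x ∈ (Set.range f)ᶜ) ⟨L, hL, hLX⟩ List.length
    (Fintype.card V) fun M ⟨⟨_, _, h, _⟩, _⟩ => h.1.length_le_card
  obtain ⟨u, hQ, -⟩ := hM.exists_maxCycle hMX fun M' h h' => hmax M' ⟨h, h'⟩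
  have := LongCycle.length_lt_of_off_cycle hl (LongCycle.kConnected_of_le_connectivity hl hκ) hdeg
    hn' hC hQ
  have := hmax L ⟨hL, hLX⟩
  omega
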